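/- arXiv:1509.05688 — 12 statements merged into one kernel-verified Lean document; each statement's English description precedes it below -/
import Mathlib

section
/- If G and H are balanced groups, then the free product G * H is a balanced group. -/
/-- A group `G` is balanced if for every element `x` of infinite order and all integers
`m, n`, if `x ^ m` is conjugate in `G` to `x ^ n` then `|m| = |n|`. -/
def IsBalanced (G : Type*) [Group G] : Prop :=
  ∀ x : G, ¬ IsOfFinOrder x → ∀ m n : ℤ, (∃ g : G, g * x ^ m * g⁻¹ = x ^ n) → |m| = |n|

open Monoid in
theorem IsBalanced.of_injective {A B : Type*} [Group A] [Group B] (f : A →* B)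
    (hf : Function.Injective f) (hB : IsBalanced B) : IsBalanced A := by
  intro x hx m n ⟨g, hg⟩
  refine hB (f x) ?_ m n ⟨f g, ?_⟩
  · rwa [hf.isOfFinOrder_iff]
  · rw [← map_zpow, ← map_zpow, ← map_inv, ← map_mul, ← map_mul, hg]

namespace BalAux
open Monoid CoprodI

variable {ι : Type*} {G : ι → Type*} [∀ i, Group (G i)]

open Classical in
noncomputable def len (x : CoprodI G) : ℕ := (Word.equiv x).toList.length

def lprod (l : List (Σ i, G i)) : CoprodI G := (l.map fun s => of s.2).prod

theorem lprod_append (l l' : List (Σ i, G i)) : lprod (l ++ l') = lprod l * lprod l' := by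
  simp [lprod]

theorem lprod_cons (s : Σ i, G i) (l' : List (Σ i, G i)) :
    lprod (s :: l') = of s.2 * lprod l' := by
  simp [lprod]

theorem len_prod (w : Word G) : len w.prod = w.toList.length := by
  classical
  have : Word.equiv w.prod = w := Word.equiv.apply_symm_apply w
  unfold len
  rw [← congrArg (fun w : Word G => w.toList.length) this]

theorem exists_word (x : CoprodI G) : ∃ w : Word G, w.prod = x := by
  classical
  exact ⟨Word.equiv x, Word.equiv.symm_apply_apply x⟩

open Classical in
theorem len_rcons_le {i} (p : Word.Pair G i) :
    (Word.rcons p).toList.length ≤ p.tail.toList.length + 1 := by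
  unfold Word.rcons
  split_ifs <;> simp [Word.cons]

open Classical in
theorem le_len_rcons {i} (p : Word.Pair G i) :
    p.tail.toList.length ≤ (Word.rcons p).toList.length := by
  unfold Word.rcons
  split_ifs <;> simp [Word.cons]

theorem len_of_mul {i} (m : G i) (x : CoprodI G) : len (of m * x) ≤ len x + 1 := by
  classical
  obtain ⟨w, rfl⟩ := exists_word x
  rw [← Word.prod_smul, len_prod, len_prod, Word.of_smul_def]
  have h1 := len_rcons_le (⟨m * (Word.equivPair i w).head, (Word.equivPair i w).tail,
    (Word.equivPair i w).fstIdx_ne⟩ : Word.Pair G i)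
  have h2 := le_len_rcons (Word.equivPair i w)
  have h3 : Word.rcons (Word.equivPair i w) = w := by
    rw [← Word.equivPair_symm, Equiv.symm_apply_apply]
  have h4 := congrArg (fun w : Word G => w.toList.length) h3
  have h5 : (Word.equivPair i w).tail.toList.length ≤ w.toList.length := by
    convert h2 using 1
    rw [← h4]
  refine le_trans ?_ (Nat.add_le_add_right h5 1)
  convert h1 using 3

theorem len_lprod_mul (l : List (Σ i, G i)) (x : CoprodI G) :
    len (lprod l * x) ≤ l.length + len x := by
  induction l with
  | nil => simp [lprod]
  | cons s l ih =>
    rw [lprod_cons, mul_assoc]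
    have := len_of_mul s.2 (lprod l * x)
    simp only [List.length_cons]
    omega

theorem len_mul (x y : CoprodI G) : len (x * y) ≤ len x + len y := by
  obtain ⟨w, rfl⟩ := exists_word x
  rw [len_prod]
  exact len_lprod_mul w.toList y

theorem len_pow {i j} (h : j ≠ i) (w : NeWord G i j) (k : ℕ) :
    ∃ w' : NeWord G i j, w'.prod = w.prod ^ (k + 1) ∧
      w'.toList.length = (k + 1) * w.toList.length := by
  induction k with
  | zero => exact ⟨w, by simp, by simp⟩
  | succ k ih =>
    obtain ⟨w', h1, h2⟩ := ih
    refine ⟨w'.append h w, ?_, ?_⟩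
    · rw [NeWord.append_prod, h1, ← pow_succ]
    · simp [h2]; ring

theorem len_pow' {i j} (h : j ≠ i) (w : NeWord G i j) (k : ℕ) :
    len (w.prod ^ (k + 1)) = (k + 1) * w.toList.length := by
  obtain ⟨w', h1, h2⟩ := len_pow h w k
  rw [← h1, ← h2]
  exact len_prod w'.toWord

/-- Every element is conjugate into a factor or to a cyclically reduced word. -/
theorem cases_conj (x : CoprodI G) : x = 1 ∨ (∃ (c : CoprodI G) (i : ι) (a : G i), 
    c * x * c⁻¹ = of a) ∨ ∃ (c : CoprodI G) (i j : ι) (_ : j ≠ i) (w : NeWord G i j), 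
    c * x * c⁻¹ = w.prod := by
  classical
  induction hn : len x using Nat.strong_induction_on generalizing x with
  | _ n ih =>
  obtain ⟨w, rfl⟩ := exists_word x
  by_cases hw : w = Word.empty
  · left; simp [hw]
  obtain ⟨i, j, w, rfl⟩ := NeWord.of_word w hw
  right
  by_cases hij : j = i
  · subst hij
    have hh := w.toList_head?
    have hl := w.toList_getLast?
    have hp : w.toWord.prod = lprod w.toList := rfl
    rw [len_prod] at hn
    change w.toList.length = n at hn
    rw [hp]
    generalize w.head = a at hh
    generalize w.last = b at hl
    generalize w.toList = l at *
    rcases l with _ | ⟨s, l⟩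
    · simp at hh
    simp at hh
    subst hh
    rcases List.eq_nil_or_concat l with rfl | ⟨l, t, rfl⟩
    · left; exact ⟨1, j, a, by simp [lprod]⟩
    have ht : t = ⟨j, b⟩ := by
      rw [List.concat_eq_append, ← List.cons_append, List.getLast?_concat] at hl
      exact Option.some.inj hl
    subst ht
    set y : CoprodI G := lprod l * of (b * a) with hy
    have hconj : lprod (⟨j, a⟩ :: (l ++ [⟨j, b⟩])) = of a * y * (of a)⁻¹ := by
      rw [lprod_cons, lprod_append, lprod_cons, hy]
      simp [lprod, mul_assoc]
    have hlen : len y < n := by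
      have h1 := len_lprod_mul l (of (b * a))
      have h2 : len (of (b * a) : CoprodI G) ≤ len (1 : CoprodI G) + 1 := by
        simpa using len_of_mul (b * a) (1 : CoprodI G)
      have h3 : len (1 : CoprodI G) = 0 := by
        rw [← Word.prod_empty, len_prod]; rfl
      simp at hn
      rw [hy]
      omega
    simp only [List.concat_eq_append]
    rw [hconj]
    rcases ih _ hlen y rfl with h | ⟨c, i, d, h⟩ | ⟨c, i, k, hik, w, h⟩
    · left; exact ⟨1, j, 1, by simp [h]⟩
    · left; exact ⟨c * (of a)⁻¹, i, d, by rw [← h]; group⟩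
    · right; exact ⟨c * (of a)⁻¹, i, k, hik, w, by rw [← h]; group⟩
  · right
    exact ⟨1, i, j, hij, w, by simp [NeWord.prod]⟩

theorem conj_sq {A : Type*} [Group A] {x g : A} {m n : ℤ} (h : g * x ^ m * g⁻¹ = x ^ n) :
    (g * g) * x ^ (m * m) * (g * g)⁻¹ = x ^ (n * n) := by
  have h1 : g * x ^ (m * m) * g⁻¹ = x ^ (n * m) := by
    rw [zpow_mul, ← conj_zpow, h, ← zpow_mul]
  have h2 : g * x ^ (n * m) * g⁻¹ = x ^ (n * n) := by
    rw [mul_comm n m, zpow_mul, ← conj_zpow, h, ← zpow_mul]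
  rw [← h2, ← h1]; group

theorem le_of_conj {i j} (h : j ≠ i) (w : NeWord G i j) (p q : ℕ) (g : CoprodI G)
    (hg : g * w.prod ^ p * g⁻¹ = w.prod ^ q) : q ≤ p := by
  have hL : 0 < w.toList.length := List.length_pos_of_ne_nil w.toList_ne_nil
  have hpow : ∀ k : ℕ, len (w.prod ^ k) = k * w.toList.length := by
    intro k
    rcases k with _ | k
    · have : (w.prod ^ 0) = Word.prod (Word.empty : Word G) := by simp
      rw [this, len_prod]; simp [Word.empty]
    · exact len_pow' h w k
  by_contra hlt
  push Not at hlt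
  set k := len g + len g⁻¹ + 1 with hk
  have h1 : g * w.prod ^ (p * k) * g⁻¹ = w.prod ^ (q * k) := by
    rw [pow_mul, ← conj_pow, hg, ← pow_mul]
  have h2 := len_mul (g * w.prod ^ (p * k)) g⁻¹
  have h3 := len_mul g (w.prod ^ (p * k))
  rw [h1, hpow] at h2
  rw [hpow] at h3
  have h4 : (p + 1) * k * w.toList.length ≤ q * k * w.toList.length := by
    gcongr; exact hlt
  have h5 : k ≤ k * w.toList.length := Nat.le_mul_of_pos_right _ hL
  have h6 : (p + 1) * k * w.toList.length = p * k * w.toList.length + k * w.toList.length := by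
    ring
  omega

theorem conj_transfer {A : Type*} [Group A] {x g : A} (c : A) {m n : ℤ}
    (h : g * x ^ m * g⁻¹ = x ^ n) :
    (c * g * c⁻¹) * (c * x * c⁻¹) ^ m * (c * g * c⁻¹)⁻¹ = (c * x * c⁻¹) ^ n := by
  rw [conj_zpow, conj_zpow, ← h]; group

theorem balanced_coprodI (hG : ∀ i, IsBalanced (G i)) : IsBalanced (CoprodI G) := by
  classical
  intro x hx m n ⟨g, hg⟩
  rcases cases_conj x with rfl | ⟨c, i, a, h⟩ | ⟨c, i, j, hij, w, h⟩
  · exact absurd IsOfFinOrder.one hx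
  · have h1 := conj_transfer c hg
    rw [h] at h1
    have hli := of_leftInverse (M := G) i
    refine hG i a ?_ m n ⟨CoprodI.lift (Pi.mulSingle i (MonoidHom.id (G i))) (c * g * c⁻¹), ?_⟩
    · intro ha
      apply hx
      have h2 : IsOfFinOrder (c * x * c⁻¹) := h ▸ (of : G i →* CoprodI G).isOfFinOrder ha
      have h3 := (MulAut.conj c⁻¹).toMonoidHom.isOfFinOrder h2
      simpa [mul_assoc] using h3
    · have h2 := congrArg (CoprodI.lift (Pi.mulSingle i (MonoidHom.id (G i)))) h1
      rw [map_mul, map_mul _ (c * g * c⁻¹), map_inv, map_zpow, map_zpow, hli a] at h2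
      exact h2
  · have h1 := conj_sq (conj_transfer c hg)
    rw [h] at h1
    have e : ∀ z : ℤ, w.prod ^ (z * z) = w.prod ^ (z.natAbs * z.natAbs) := by
      intro z
      rw [← zpow_natCast, Nat.cast_mul, Int.natAbs_mul_self' z]
    rw [e, e] at h1
    have a1 := le_of_conj hij w _ _ _ h1
    have a2 := le_of_conj hij w (n.natAbs * n.natAbs) (m.natAbs * m.natAbs) (c * g * c⁻¹ * (c * g * c⁻¹))⁻¹ (by rw [← h1]; group)
    have := Nat.mul_self_inj.1 (le_antisymm a1 a2)
    rw [Int.abs_eq_natAbs, Int.abs_eq_natAbs, this]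

def Fam (G : Type u) (H : Type v) : Bool → Type (max u v)
  | true => ULift.{v} G
  | false => ULift.{u} H

instance (G : Type u) (H : Type v) [Group G] [Group H] : ∀ b, Group (Fam G H b)
  | true => inferInstanceAs (Group (ULift.{v} G))
  | false => inferInstanceAs (Group (ULift.{u} H))

end BalAux

open BalAux Monoid in
/-- If `G` and `H` are balanced groups, then the free product (coproduct) `G ∗ H`
is balanced. -/
theorem balanced_free_prod {G H : Type*} [Group G] [Group H]
    (hG : IsBalanced G) (hH : IsBalanced H) : IsBalanced (Monoid.Coprod G H) := by
  have hF : ∀ b, IsBalanced (Fam G H b) := by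
    rintro (_ | _)
    · exact IsBalanced.of_injective (MulEquiv.ulift (α := H)).toMonoidHom
        (MulEquiv.ulift (α := H)).injective hH
    · exact IsBalanced.of_injective (MulEquiv.ulift (α := G)).toMonoidHom
        (MulEquiv.ulift (α := G)).injective hG
  let iG : G →* Fam G H true := (MulEquiv.ulift (α := G)).symm.toMonoidHom
  let iH : H →* Fam G H false := (MulEquiv.ulift (α := H)).symm.toMonoidHom
  let jj : ∀ b, Fam G H b →* Coprod G H := fun b => match b with
    | true => Coprod.inl.comp (MulEquiv.ulift (α := G)).toMonoidHom
    | false => Coprod.inr.comp (MulEquiv.ulift (α := H)).toMonoidHom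
  let f : Coprod G H →* CoprodI (Fam G H) :=
    Coprod.lift (CoprodI.of.comp iG) (CoprodI.of.comp iH)
  have hc : (CoprodI.lift jj).comp f = MonoidHom.id _ := by
    apply Coprod.hom_ext
    · ext x
      simp only [f, MonoidHom.comp_apply, Coprod.lift_apply_inl, CoprodI.lift_of]
      rfl
    · ext x
      simp only [f, MonoidHom.comp_apply, Coprod.lift_apply_inr, CoprodI.lift_of]
      rfl
  exact IsBalanced.of_injective f
    (Function.LeftInverse.injective (g := CoprodI.lift jj) fun x => DFunLike.congr_fun hc x)
    (balanced_coprodI hF)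
end

section
/- Every subgroup of a balanced group is balanced. Conversely, if a group G contains a finite index subgroup H which is balanced, then G is balanced. -/
/-- Every subgroup of a balanced group is balanced; conversely, if `G` contains a
balanced subgroup of finite index then `G` is balanced. -/
theorem balanced_subgroup {G : Type*} [Group G] :
    (∀ H : Subgroup G, IsBalanced G → IsBalanced H) ∧
    (∀ H : Subgroup G, H.FiniteIndex → IsBalanced H → IsBalanced G) := by
  refine ⟨?_, ?_⟩
  · intro H hG x hx m n ⟨g, hg⟩
    refine hG (x : G) ?_ m n ⟨g, ?_⟩
    · exact fun h => hx (Submonoid.isOfFinOrder_coe.1 h)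
    · simpa using congrArg (Subtype.val) hg
  · intro H hfi hH x hx m n ⟨g, hg⟩
    obtain ⟨k, hk, -, hgk⟩ := Subgroup.exists_pow_mem_of_index_ne_zero hfi.index_ne_zero g
    obtain ⟨l, hl, -, hxl⟩ := Subgroup.exists_pow_mem_of_index_ne_zero hfi.index_ne_zero x
    have key : ∀ k : ℕ, g ^ k * x ^ (m ^ k) * (g ^ k)⁻¹ = x ^ (n ^ k) := by
      intro k
      induction k with
      | zero => simp
      | succ k ih =>
        calc g ^ (k+1) * x ^ (m ^ (k+1)) * (g ^ (k+1))⁻¹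
            = g ^ k * (g * (x ^ m) ^ (m ^ k) * g⁻¹) * (g ^ k)⁻¹ := by
              rw [← zpow_mul, ← pow_succ' m k, pow_succ g k]; group
          _ = g ^ k * (x ^ n) ^ (m ^ k) * (g ^ k)⁻¹ := by rw [← conj_zpow, hg]
          _ = (g ^ k * x ^ (m ^ k) * (g ^ k)⁻¹) ^ n := by
              rw [conj_zpow, ← zpow_mul, ← zpow_mul, mul_comm]
          _ = x ^ (n ^ (k+1)) := by rw [ih, ← zpow_mul, pow_succ]
    have h := hH ⟨x ^ l, hxl⟩ ?_ (m ^ k) (n ^ k) ⟨⟨g ^ k, hgk⟩, ?_⟩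
    · rw [abs_pow, abs_pow] at h
      exact (pow_left_inj₀ (abs_nonneg m) (abs_nonneg n) hk.ne').1 h
    · skip
      intro h0
      have h := (Submonoid.isOfFinOrder_coe (H := H.toSubmonoid)).2 h0
      exact hx ((isOfFinOrder_pow.1 h).resolve_right hl.ne')
    · apply Subtype.ext
      have e : ∀ a : ℤ, (x ^ l) ^ a = (x ^ a) ^ l := fun a => by
        rw [← zpow_natCast, ← zpow_natCast, ← zpow_mul, ← zpow_mul, mul_comm]
      simp only [Subgroup.coe_mul, Subgroup.coe_inv, Subgroup.coe_zpow]
      rw [e, e, ← conj_pow, key]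
end

section
/- Let G be a group, x ∈ G an element of infinite order, and suppose g x^m g⁻¹ = x^n holds in G for some g ∈ G and integers m, n with |m| ≠ |n|. Then at least one of the infinite cyclic subgroups ⟨x^m⟩ or ⟨x^n⟩ is not separable in G. In particular, a group in which every cyclic subgroup is separable is balanced. -/
/-- A subgroup `S` of `G` is separable if every element outside `S` can be excluded
by a finite-index subgroup containing `S`. -/
def IsSeparable' {G : Type*} [Group G] (S : Subgroup G) : Prop :=
  ∀ g : G, g ∉ S → ∃ K : Subgroup G, K.FiniteIndex ∧ S ≤ K ∧ g ∉ K

lemma aux_mem {Q : Type*} [Group Q] [Finite Q] (y g : Q) (m n : ℤ)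
    (h : g * y ^ m * g⁻¹ = y ^ n) : y ^ m ∈ Subgroup.zpowers (y ^ n) := by
  have hk : (0 : ℤ) < orderOf y := by exact_mod_cast orderOf_pos y
  set k : ℤ := (orderOf y : ℤ) with hkdef
  have hd : ((Int.gcd n k : ℕ) : ℤ) ∣ m := by
    obtain ⟨j, hj⟩ := Int.gcd_dvd_right n k
    obtain ⟨a, ha⟩ := Int.gcd_dvd_left n k
    have hj0 : j ≠ 0 := by
      rintro rfl
      simp at hj
      omega
    have h1 : k ∣ n * j := ⟨a, by
      calc n * j = (Int.gcd n k * a) * j := by rw [← ha]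
        _ = (Int.gcd n k * j) * a := by ring
        _ = k * a := by rw [← hj]⟩
    have h2 : y ^ (n * j) = 1 := orderOf_dvd_iff_zpow_eq_one.mp h1
    have h3 : y ^ (m * j) = 1 := by
      rw [zpow_mul, ← h, conj_zpow] at h2
      rw [zpow_mul]
      simpa using h2
    have h4 : k ∣ m * j := orderOf_dvd_iff_zpow_eq_one.mpr h3
    rw [hj] at h4
    rw [← hj] at h4
    have h5 : (Int.gcd n k : ℤ) * j ∣ m * j := by rw [← hj]; exact h4
    exact Int.dvd_of_mul_dvd_mul_right hj0 h5
  obtain ⟨c, hc⟩ := hd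
  refine Subgroup.mem_zpowers_iff.mpr ⟨Int.gcdA n k * c, ?_⟩
  have hb := Int.gcd_eq_gcd_ab n k
  have hyk : y ^ k = 1 := by rw [hkdef, zpow_natCast, pow_orderOf_eq_one]
  have : m = n * (Int.gcdA n k * c) + k * (Int.gcdB n k * c) := by
    rw [hb] at hc
    linear_combination hc
  conv_rhs => rw [this]
  rw [zpow_add, zpow_mul y k, hyk, one_zpow, mul_one, zpow_mul y n]

lemma aux_sep {G : Type*} [Group G] (x g : G) (m n : ℤ) (hx : ¬ IsOfFinOrder x)
    (h : g * x ^ m * g⁻¹ = x ^ n) (hs : IsSeparable' (Subgroup.zpowers (x ^ n))) : n ∣ m := by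
  by_cases hm : x ^ m ∈ Subgroup.zpowers (x ^ n)
  · obtain ⟨c, hc⟩ := Subgroup.mem_zpowers_iff.mp hm
    rw [← zpow_mul] at hc
    exact ⟨c, ((injective_zpow_iff_not_isOfFinOrder.mpr hx) hc).symm⟩
  · exfalso
    obtain ⟨K, hK, hle, hnot⟩ := hs _ hm
    have := aux_mem (Q := G ⧸ K.normalCore) (x : G ⧸ K.normalCore) (g : G ⧸ K.normalCore) m n
      (by exact_mod_cast congrArg (QuotientGroup.mk (s := K.normalCore)) h)
    obtain ⟨c, hc⟩ := Subgroup.mem_zpowers_iff.mp this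
    have hc' : (((x ^ n) ^ c : G) : G ⧸ K.normalCore) = ((x ^ m : G) : G ⧸ K.normalCore) := by
      exact_mod_cast hc
    have h2 := K.normalCore_le (QuotientGroup.eq.mp hc')
    have h3 : (x ^ n) ^ c ∈ K := hle (Subgroup.zpow_mem_zpowers _ c)
    exact hnot ((K.mul_mem_cancel_left (K.inv_mem h3)).mp h2)

/-- If `g * x^m * g⁻¹ = x^n` with `x` of infinite order and `|m| ≠ |n|`, then one of the
cyclic subgroups `⟨x^m⟩`, `⟨x^n⟩` is not separable in `G`.  In particular a group all of
whose cyclic subgroups are separable is balanced. -/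
theorem not_separable_of_unbalanced {G : Type*} [Group G] :
    (∀ (x g : G) (m n : ℤ), ¬ IsOfFinOrder x → g * x ^ m * g⁻¹ = x ^ n → |m| ≠ |n| →
      ¬ IsSeparable' (Subgroup.zpowers (x ^ m)) ∨ ¬ IsSeparable' (Subgroup.zpowers (x ^ n))) ∧
    ((∀ x : G, IsSeparable' (Subgroup.zpowers x)) → IsBalanced G) := by
  have key : ∀ (x g : G) (m n : ℤ), ¬ IsOfFinOrder x → g * x ^ m * g⁻¹ = x ^ n → |m| ≠ |n| →
      ¬ IsSeparable' (Subgroup.zpowers (x ^ m)) ∨ ¬ IsSeparable' (Subgroup.zpowers (x ^ n)) := by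
    intro x g m n hx h hmn
    by_contra! hcon
    obtain ⟨h1, h2⟩ := hcon
    have a := aux_sep x g m n hx h h2
    have b := aux_sep x g⁻¹ n m hx (by rw [← h]; group) h1
    exact hmn (by rw [Int.abs_eq_natAbs, Int.abs_eq_natAbs, Int.natAbs_eq_of_dvd_dvd b a])
  refine ⟨key, fun hs x hx m n ⟨g, h⟩ => ?_⟩
  by_contra hmn
  rcases key x g m n hx h hmn with h' | h'
  · exact h' (hs _)
  · exact h' (hs _)
end

section
/- Let G be a group containing a finite index subgroup isomorphic to a semidirect product F ⋊ ℤ, where F is a free group (of arbitrary, possibly infinite, rank). Then G is balanced. In particular every free-by-cyclic group F ⋊ ℤ with F free is balanced. -/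
theorem fbc_subsingleton {α : Type*} (z : FreeGroup α) (hz : z ≠ 1)
    (hc : ∀ y, z * y = y * z) : Subsingleton α := by
  classical
  rcases hw : z.toWord with _ | ⟨⟨b, s⟩, t⟩
  · exact absurd (FreeGroup.toWord_eq_nil_iff.mp hw) hz
  have key : ∀ a, a = b := by
    intro a
    by_contra hab
    have hred : FreeGroup.IsReduced ((a, true) :: z.toWord) := by
      have h := FreeGroup.isReduced_toWord (x := z)
      rw [hw] at h ⊢
      rw [FreeGroup.IsReduced] at h ⊢
      refine List.isChain_cons_cons.mpr ⟨?_, h⟩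
      intro h'
      exact absurd h' hab
    have h1 : (FreeGroup.of a * z).toWord = (a, true) :: z.toWord := by
      rw [FreeGroup.toWord_mul, FreeGroup.toWord_of]
      exact hred.reduce_eq
    have h2 : (z * FreeGroup.of a).toWord.Sublist (z.toWord ++ [(a, true)]) := by
      rw [FreeGroup.toWord_mul, FreeGroup.toWord_of]
      exact FreeGroup.reduce.red.sublist
    rw [hc, h1] at h2
    have h3 := h2.eq_of_length (by simp)
    rw [hw] at h3
    simp at h3
    exact hab h3.1.1
  exact ⟨fun x y => (key x).trans (key y).symm⟩

theorem fbc_cyclic {α : Type*} [Subsingleton α] : ∃ c : FreeGroup α, ∀ y, y ∈ Subgroup.zpowers c := by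
  rcases isEmpty_or_nonempty α with h | ⟨⟨a⟩⟩
  · exact ⟨1, fun y => by rw [Subsingleton.elim y 1]; exact one_mem _⟩
  · refine ⟨FreeGroup.of a, fun y => ?_⟩
    induction y using FreeGroup.induction_on with
    | C1 => exact one_mem _
    | of x => rw [Subsingleton.elim x a]; exact Subgroup.mem_zpowers _
    | inv_of x h => exact inv_mem h
    | mul x y hx hy => exact mul_mem hx hy

theorem fbc_centralizer {α : Type} (f : FreeGroup α) (hf : f ≠ 1) :
    ∃ c : FreeGroup α, Subgroup.centralizer {f} = Subgroup.zpowers c := by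
  let C := Subgroup.centralizer {f}
  have hfC : f ∈ C := Subgroup.mem_centralizer_singleton_iff.mpr rfl
  have : IsFreeGroup C := inferInstance
  let e := IsFreeGroup.toFreeGroup C
  have hs : Subsingleton (IsFreeGroup.Generators C) := by
    refine fbc_subsingleton (e ⟨f, hfC⟩) ?_ ?_
    · intro h
      rw [map_eq_one_iff e e.injective] at h
      exact hf (congrArg Subtype.val h)
    · intro y
      obtain ⟨y, rfl⟩ := e.surjective y
      rw [← map_mul, ← map_mul]
      congr 1
      ext1
      exact (Subgroup.mem_centralizer_singleton_iff.mp y.2).symm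
  obtain ⟨c, hc⟩ := fbc_cyclic (α := IsFreeGroup.Generators C)
  refine ⟨(e.symm c : C), le_antisymm ?_ ?_⟩
  · intro y hy
    obtain ⟨k, hk⟩ := Subgroup.mem_zpowers_iff.mp (hc (e ⟨y, hy⟩))
    refine Subgroup.mem_zpowers_iff.mpr ⟨k, ?_⟩
    have := congrArg e.symm hk
    rw [map_zpow, e.symm_apply_apply] at this
    simpa using congrArg Subtype.val this
  · rw [Subgroup.zpowers_le]
    exact (e.symm c).2

theorem fbc_centralizer_zpow {α : Type} (f : FreeGroup α) (hf : f ≠ 1) (n : ℤ) (hn : n ≠ 0) :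
    Subgroup.centralizer {f ^ n} = Subgroup.centralizer {f} := by
  have hfn : f ^ n ≠ 1 := by
    rwa [Ne, IsMulTorsionFree.zpow_eq_one_iff_left hn]
  obtain ⟨c, hc⟩ := fbc_centralizer (f ^ n) hfn
  have hfC : f ∈ Subgroup.zpowers c := by
    rw [← hc]
    exact Subgroup.mem_centralizer_singleton_iff.mpr ((Commute.refl f).zpow_right n)
  apply le_antisymm
  · intro y hy
    rw [hc] at hy
    obtain ⟨i, rfl⟩ := hy
    obtain ⟨j, rfl⟩ := hfC
    exact Subgroup.mem_centralizer_singleton_iff.mpr (((Commute.refl c).zpow_right j).zpow_left i)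
  · intro y hy
    have : Commute y f := Subgroup.mem_centralizer_singleton_iff.mp hy
    exact Subgroup.mem_centralizer_singleton_iff.mpr (this.zpow_right n)

theorem fbc_free {α : Type} (ψ : FreeGroup α ≃* FreeGroup α) (f : FreeGroup α) (hf : f ≠ 1)
    (m n : ℤ) (h : ψ f ^ m = f ^ n) : |m| = |n| := by
  have hψf : ψ f ≠ 1 := by rwa [Ne, map_eq_one_iff ψ ψ.injective]
  by_cases hm : m = 0
  · subst hm
    rw [zpow_zero, eq_comm] at h
    by_cases hn : n = 0
    · rw [hn]
    · exact absurd ((IsMulTorsionFree.zpow_eq_one_iff_left hn).mp h) hf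
  by_cases hn : n = 0
  · subst hn
    rw [zpow_zero] at h
    exact absurd ((IsMulTorsionFree.zpow_eq_one_iff_left hm).mp h) hψf
  obtain ⟨c, hc⟩ := fbc_centralizer f hf
  have hC : Subgroup.centralizer {ψ f} = Subgroup.centralizer {f} := by
    rw [← fbc_centralizer_zpow _ hψf m hm, h, fbc_centralizer_zpow _ hf n hn]
  have hmap : Subgroup.zpowers (ψ c) = Subgroup.zpowers c := by
    have h1 : (Subgroup.centralizer {f}).map ψ.toMonoidHom = Subgroup.centralizer {ψ f} := by
      ext y
      obtain ⟨y, rfl⟩ := ψ.surjective y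
      constructor
      · rintro ⟨w, hw, hwy⟩
        have hwy' : w = y := ψ.injective hwy
        subst hwy'
        have := congrArg ψ (Subgroup.mem_centralizer_singleton_iff.mp hw)
        rw [map_mul, map_mul] at this
        exact Subgroup.mem_centralizer_singleton_iff.mpr this
      · intro hy
        have := Subgroup.mem_centralizer_singleton_iff.mp hy
        rw [← map_mul, ← map_mul] at this
        exact ⟨y, Subgroup.mem_centralizer_singleton_iff.mpr (ψ.injective this), rfl⟩
    rw [hC, hc, MonoidHom.map_zpowers] at h1
    exact h1
  have hfc : f ∈ Subgroup.zpowers c := by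
    rw [← hc]
    exact Subgroup.mem_centralizer_singleton_iff.mpr rfl
  obtain ⟨k, hk⟩ := Subgroup.mem_zpowers_iff.mp hfc
  have hc1 : c ≠ 1 := by
    rintro rfl
    rw [one_zpow] at hk
    exact hf hk.symm
  have hk0 : k ≠ 0 := by
    rintro rfl
    rw [zpow_zero] at hk
    exact hf hk.symm
  have hcf : ¬ IsOfFinOrder c := by
    rwa [isOfFinOrder_iff_eq_one]
  have hinj := injective_zpow_iff_not_isOfFinOrder.mpr hcf
  have hcase : ψ c = c ∨ ψ c = c⁻¹ := by
    rcases (Subgroup.zpowers_eq_zpowers_iff hcf).mp hmap.symm with h | h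
    · exact Or.inl h.symm
    · right; rw [← h]
  subst hk
  rw [map_zpow] at h
  rcases hcase with h' | h'
  · rw [h', ← zpow_mul, ← zpow_mul] at h
    rw [mul_left_cancel₀ hk0 (hinj h)]
  · rw [h', inv_zpow', ← zpow_mul, ← zpow_mul] at h
    have h2 : k * (-m) = k * n := by
      have := hinj h
      linarith
    rw [← mul_left_cancel₀ hk0 h2, abs_neg]

theorem fbc_balanced (β : Type) (φ : Multiplicative ℤ →* MulAut (FreeGroup β)) :
    IsBalanced (SemidirectProduct (FreeGroup β) (Multiplicative ℤ) φ) := by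
  rintro x hx m n ⟨g, hg⟩
  by_cases ha : x.right = 1
  · obtain ⟨f, rfl⟩ : ∃ f, x = SemidirectProduct.inl f :=
      ⟨x.left, by ext <;> simp [ha]⟩
    have hf : f ≠ 1 := by
      rintro rfl
      exact hx (by simp)
    refine fbc_free ((φ g.right).trans (MulAut.conj g.left)) f hf m n ?_
    have h2 := congrArg SemidirectProduct.left hg
    rw [← map_zpow SemidirectProduct.inl, ← map_zpow SemidirectProduct.inl] at h2
    simp only [SemidirectProduct.mul_left, SemidirectProduct.mul_right, SemidirectProduct.inv_left,
      SemidirectProduct.left_inl, SemidirectProduct.right_inl, mul_one, map_inv,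
      MulAut.apply_inv_self] at h2
    simp only [MulEquiv.trans_apply, MulAut.conj_apply, conj_zpow]
    rw [map_zpow] at h2
    exact h2
  · have h2 := congrArg (SemidirectProduct.rightHom) hg
    simp only [map_mul, map_zpow, map_inv, mul_inv_cancel_comm] at h2
    have h3 : m * Multiplicative.toAdd x.right = n * Multiplicative.toAdd x.right := by
      simpa using congrArg Multiplicative.toAdd h2
    have h4 : Multiplicative.toAdd x.right ≠ 0 := fun h => ha (by simpa using h)
    rw [mul_right_cancel₀ h4 h3]

theorem fbc_iter {G : Type*} [Group G] (x g : G) (m n : ℤ) (h : g * x ^ m * g⁻¹ = x ^ n) (k : ℕ) :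
    g ^ k * x ^ (m ^ k) * (g ^ k)⁻¹ = x ^ (n ^ k) := by
  induction k with
  | zero => simp
  | succ k ih =>
    have h1 : g * x ^ (m ^ (k + 1)) * g⁻¹ = (x ^ (m ^ k)) ^ n := by
      rw [pow_succ', zpow_mul, ← conj_zpow, h, ← zpow_mul, ← zpow_mul, mul_comm]
    have h2 : g ^ (k + 1) * x ^ (m ^ (k + 1)) * (g ^ (k + 1))⁻¹
        = g ^ k * (g * x ^ (m ^ (k + 1)) * g⁻¹) * (g ^ k)⁻¹ := by
      rw [pow_succ]; group
    rw [h2, h1, ← conj_zpow, ih, ← zpow_mul, pow_succ]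

theorem fbc_virtual {G K : Type*} [Group G] [Group K] (H : Subgroup G) (hH : H.FiniteIndex)
    (e : H ≃* K) (hK : IsBalanced K) : IsBalanced G := by
  rintro x hx m n ⟨g, hg⟩
  obtain ⟨k, hk, -, hgk⟩ := Subgroup.exists_pow_mem_of_index_ne_zero hH.index_ne_zero g
  obtain ⟨l, hl, -, hxl⟩ := Subgroup.exists_pow_mem_of_index_ne_zero hH.index_ne_zero x
  have h1 : g ^ k * (x ^ l) ^ (m ^ k) * (g ^ k)⁻¹ = (x ^ l) ^ (n ^ k) := by
    have := congrArg (fun y => y ^ l) (fbc_iter x g m n hg k)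
    simp only [conj_pow] at this
    have hc : ∀ i : ℤ, (x ^ i) ^ l = (x ^ l) ^ i := fun i => by
      rw [← zpow_natCast, ← zpow_natCast, ← zpow_mul, ← zpow_mul, mul_comm]
    rw [hc, hc] at this
    exact this
  have h2 := hK (e ⟨x ^ l, hxl⟩) ?_ (m ^ k) (n ^ k) ⟨e ⟨g ^ k, hgk⟩, ?_⟩
  · rw [abs_pow, abs_pow] at h2
    exact (pow_left_inj₀ (abs_nonneg _) (abs_nonneg _) (by omega)).mp h2
  · intro hfin
    have h3 := (H.subtype.comp e.symm.toMonoidHom).isOfFinOrder hfin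
    have h4 : IsOfFinOrder (x ^ l) := by simpa using h3
    exact hx (h4.of_pow (by omega))
  · rw [← map_zpow, ← map_zpow, ← map_inv, ← map_mul, ← map_mul]
    congr 1
    ext1
    simpa using h1

/-- A group with a finite index subgroup isomorphic to `F ⋊ ℤ` for a free group `F`
(of arbitrary rank) is balanced; in particular every free-by-cyclic group `F ⋊ ℤ`
is balanced. -/
theorem balanced_of_virtually_free_by_cyclic :
    (∀ (G : Type) [Group G] (H : Subgroup G), H.FiniteIndex →
      ∀ (β : Type) (φ : Multiplicative ℤ →* MulAut (FreeGroup β)),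
        Nonempty (H ≃* SemidirectProduct (FreeGroup β) (Multiplicative ℤ) φ) →
        IsBalanced G) ∧
    (∀ (β : Type) (φ : Multiplicative ℤ →* MulAut (FreeGroup β)),
      IsBalanced (SemidirectProduct (FreeGroup β) (Multiplicative ℤ) φ)) := by
  exact ⟨fun G _ H hH β φ ⟨e⟩ => fbc_virtual H hH e (fbc_balanced β φ), fbc_balanced⟩
end

section
/- For every natural number n, every subgroup of GL(n, ℤ) is balanced. Equivalently, if g x^m g⁻¹ = x^n holds in a group G where x has infinite order and |m| ≠ |n|, then there is no injective homomorphism from G into GL(n, ℤ) for any n. -/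
lemma aux_rou (S : Set ℂ) (hS : S.Finite) (h0 : (0:ℂ) ∉ S) (a b : ℕ) (hb : 0 < b) (hab : a ≠ b)
    (ha : 0 < a) (h : ∀ l ∈ S, ∃ μ ∈ S, μ ^ a = l ^ b) : ∀ l ∈ S, ∃ N : ℕ, 0 < N ∧ l ^ N = 1 := by
  have key : ∀ (z : ℂ), z ≠ 0 → ∀ c d : ℕ, c < d → z ^ c = z ^ d → ∃ N : ℕ, 0 < N ∧ z ^ N = 1 := by
    intro z hz c d hcd he
    refine ⟨d - c, by omega, ?_⟩
    have h1 : z ^ c * z ^ (d - c) = z ^ c * 1 := by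
      rw [← pow_add, mul_one, he]; congr 1; omega
    exact mul_left_cancel₀ (pow_ne_zero _ hz) h1
  have : Finite S := hS
  choose f hf using fun l : S => (by
    obtain ⟨μ, hμ, e⟩ := h l l.2
    exact ⟨⟨μ, hμ⟩, e⟩ : ∃ μ : S, (μ:ℂ) ^ a = (l:ℂ) ^ b)
  have hit : ∀ i (l : S), ((f^[i] l : S) : ℂ) ^ (a ^ i) = (l : ℂ) ^ (b ^ i) := by
    intro i
    induction i with
    | zero => intro l; simp
    | succ i ih =>
      intro l
      rw [Function.iterate_succ_apply', pow_succ', pow_mul, hf, ← pow_mul, mul_comm, pow_mul, ih,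
        ← pow_mul, ← pow_succ]
  intro l hl
  obtain ⟨i, j, hij, e⟩ := Finite.exists_ne_map_eq_of_infinite (fun i : ℕ => f^[i] ⟨l, hl⟩)
  wlog hlt : i < j generalizing i j
  · exact this j i hij.symm e.symm (by omega)
  obtain ⟨p, rfl⟩ := Nat.exists_eq_add_of_lt hlt
  change f^[i] ⟨l, hl⟩ = f^[i + p + 1] ⟨l, hl⟩ at e
  set μ := f^[i] ⟨l, hl⟩ with hμ
  have e2 : f^[p+1] μ = μ := by
    rw [hμ, ← Function.iterate_add_apply, ← hμ, e, show p + 1 + i = i + p + 1 by omega]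
  have e3 := hit (p+1) μ
  rw [e2] at e3
  have hμ0 : (μ : ℂ) ≠ 0 := fun hh => h0 (hh ▸ μ.2)
  have hne : a ^ (p+1) ≠ b ^ (p+1) := fun hh => hab (Nat.pow_left_injective (by omega) hh)
  obtain ⟨N, hN, hN1⟩ : ∃ N : ℕ, 0 < N ∧ (μ:ℂ) ^ N = 1 := by
    rcases lt_or_gt_of_ne hne with hh | hh
    · exact key _ hμ0 _ _ hh e3
    · exact key _ hμ0 _ _ hh e3.symm
  refine ⟨b ^ i * N, by positivity, ?_⟩
  have e4 := hit i ⟨l, hl⟩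
  rw [← hμ] at e4
  rw [pow_mul]
  change ((l : ℂ) ^ (b ^ i)) ^ N = 1
  have e5 : (μ:ℂ) ^ (a ^ i) = l ^ (b ^ i) := e4
  rw [← e5, ← pow_mul, mul_comm, pow_mul, hN1, one_pow]

lemma aux_unip {R : Type*} [Ring R] (N : R) (s : ℕ) (h : N ^ (s+1) = 0) (m : ℕ) :
    ((1 + N) ^ m - 1) ^ s = (m : R) ^ s * N ^ s := by
  set S := ∑ i ∈ Finset.range m, (1 + N) ^ i with hS
  have h1 : (1 + N) ^ m - 1 = S * N := by
    rw [← geom_sum_mul (1 + N) m]; simp [hS]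
  have hN : Commute S N := by
    apply Commute.symm
    apply Commute.sum_right
    intro i _
    exact ((Commute.one_right N).add_right (Commute.refl N)).pow_right i
  have h2 : ∀ i : ℕ, (1 + N) ^ i * N ^ s = N ^ s := by
    intro i
    induction i with
    | zero => simp
    | succ i ih =>
      rw [pow_succ, mul_assoc, add_mul, one_mul, ← pow_succ', h, add_zero, ih]
  have h3 : S * N ^ s = (m : R) * N ^ s := by
    rw [hS, Finset.sum_mul, Finset.sum_congr rfl (fun i _ => h2 i)]; simp
  have h4 : ∀ t : ℕ, S ^ t * N ^ s = (m : R) ^ t * N ^ s := by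
    intro t
    induction t with
    | zero => simp
    | succ t ih =>
      rw [pow_succ, mul_assoc, h3, ← mul_assoc, ← (Nat.cast_commute m (S ^ t)).eq, mul_assoc, ih,
        ← mul_assoc, ← pow_succ']
  rw [h1, hN.mul_pow, h4]

lemma aux_growth {k : ℕ} (M : Matrix (Fin k) (Fin k) ℤ)
    (φ : Matrix (Fin k) (Fin k) ℤ →+ Matrix (Fin k) (Fin k) ℤ)
    (A B : ℕ) (hA : 0 < A) (hAB : A < B) (h : A • M = B • φ M) : M = 0 := by
  have hit : ∀ j : ℕ, ∃ M' : Matrix (Fin k) (Fin k) ℤ, A ^ j • M = B ^ j • M' ∧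
      A • M' = B • φ M' := by
    intro j
    induction j with
    | zero => exact ⟨M, by simp, h⟩
    | succ j ih =>
      obtain ⟨M', h1, h2⟩ := ih
      refine ⟨φ M', ?_, ?_⟩
      · rw [pow_succ', mul_smul, h1, smul_comm, h2, pow_succ, mul_smul]
      · rw [← map_nsmul, h2, map_nsmul]
  ext i j
  by_contra hne
  have hB : (0:ℝ) < B := by exact_mod_cast (by omega : 0 < B)
  have hpos : (0:ℝ) < ((|M i j| : ℤ) : ℝ) := by
    have : (0:ℤ) < |M i j| := abs_pos.mpr hne
    exact_mod_cast this
  obtain ⟨t, ht⟩ := exists_pow_lt_of_lt_one (x := 1 / ((|M i j| : ℤ) : ℝ)) (y := (A / B : ℝ))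
    (by positivity) (by rw [div_lt_one hB]; exact_mod_cast hAB)
  rw [div_pow, div_lt_div_iff₀ (by positivity) hpos, one_mul] at ht
  have ht' : (A:ℤ) ^ t * |M i j| < (B:ℤ) ^ t := by exact_mod_cast ht
  obtain ⟨M', e, -⟩ := hit t
  have e' := congrFun (congrFun e i) j
  simp only [Matrix.smul_apply, nsmul_eq_mul] at e'
  push_cast at e'
  have h5 : (B:ℤ) ^ t ∣ (A:ℤ) ^ t * |M i j| := by
    rw [← abs_of_nonneg (by positivity : (0:ℤ) ≤ (A:ℤ) ^ t), ← abs_mul, dvd_abs, e']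
    exact dvd_mul_right _ _
  have h6 := Int.eq_zero_of_dvd_of_nonneg_of_lt (by positivity) ht' h5
  rcases mul_eq_zero.mp h6 with h7 | h7
  · exact (by positivity : (A:ℤ) ^ t ≠ 0) h7
  · exact hne (abs_eq_zero.mp h7)

lemma aux_unipotent {k : ℕ} (x : Matrix.GeneralLinearGroup (Fin k) ℤ)
    (h : ∀ l ∈ spectrum ℂ ((x : Matrix (Fin k) (Fin k) ℤ).map (Int.castRingHom ℂ)),
      ∃ N : ℕ, 0 < N ∧ l ^ N = 1) :
    ∃ K : ℕ, 0 < K ∧ ∃ r : ℕ, ((x : Matrix (Fin k) (Fin k) ℤ) ^ K - 1) ^ r = 0 := by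
  set X := (x : Matrix (Fin k) (Fin k) ℤ).map (Int.castRingHom ℂ) with hX
  have hfin := Matrix.finite_spectrum X
  choose! f hf using h
  set K := ∏ l ∈ hfin.toFinset, f l with hK
  have hK0 : 0 < K := Finset.prod_pos fun l hl => (hf l (hfin.mem_toFinset.mp hl)).1
  have hKl : ∀ l ∈ spectrum ℂ X, l ^ K = 1 := by
    intro l hl
    obtain ⟨c, hc⟩ := Finset.dvd_prod_of_mem f (hfin.mem_toFinset.mpr hl)
    rw [hK, hc, pow_mul, (hf l hl).2, one_pow]
  refine ⟨K, hK0, k, ?_⟩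
  have hd : X.charpoly ∣ (Polynomial.X ^ K - 1) ^ k := by
    have hsp := IsAlgClosed.splits X.charpoly
    rw [hsp.eq_prod_roots_of_monic X.charpoly_monic]
    have hcard : X.charpoly.roots.card = k := by
      rw [← hsp.natDegree_eq_card_roots]; simp
    have : (Polynomial.X ^ K - 1 : Polynomial ℂ) ^ k
        = (X.charpoly.roots.map fun _ => (Polynomial.X ^ K - 1 : Polynomial ℂ)).prod := by
      simp [hcard]
    rw [this]
    apply Multiset.prod_dvd_prod_of_dvd
    intro l hl
    rw [Polynomial.dvd_iff_isRoot]
    have hl' := hKl l (Matrix.mem_spectrum_of_isRoot_charpoly (Polynomial.isRoot_of_mem_roots hl))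
    simp [hl']
  have h0 : (X ^ K - 1) ^ k = 0 := by
    obtain ⟨q, hq⟩ := hd
    have := congrArg (Polynomial.aeval X) hq
    rw [map_mul, Matrix.aeval_self_charpoly, zero_mul] at this
    simpa using this
  have hinj : Function.Injective
      ((Int.castRingHom ℂ).mapMatrix : Matrix (Fin k) (Fin k) ℤ →+* Matrix (Fin k) (Fin k) ℂ) :=
    Matrix.map_injective Int.cast_injective
  apply hinj
  rw [map_pow, map_sub, map_pow, map_one, map_zero]
  exact h0

lemma aux_nat {k : ℕ} (x g : Matrix.GeneralLinearGroup (Fin k) ℤ) (a b : ℕ) (ha : 0 < a)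
    (hab : a < b) (h : g * x ^ a * g⁻¹ = x ^ b) : IsOfFinOrder x := by
  have hspec : ∀ l ∈ spectrum ℂ ((x : Matrix (Fin k) (Fin k) ℤ).map (Int.castRingHom ℂ)),
      ∃ N : ℕ, 0 < N ∧ l ^ N = 1 := by
    set F := Units.map ((Int.castRingHom ℂ).mapMatrix :
      Matrix (Fin k) (Fin k) ℤ →+* Matrix (Fin k) (Fin k) ℂ).toMonoidHom with hF
    have hx : (x : Matrix (Fin k) (Fin k) ℤ).map (Int.castRingHom ℂ) = (F x : Matrix _ _ ℂ) := rfl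
    rw [hx]
    have hF1 : F g * F x ^ a * (F g)⁻¹ = F x ^ b := by
      rw [← map_pow, ← map_pow, ← map_inv, ← map_mul, ← map_mul, h]
    have hs : spectrum ℂ ((F x : Matrix (Fin k) (Fin k) ℂ) ^ b)
        = spectrum ℂ ((F x : Matrix (Fin k) (Fin k) ℂ) ^ a) := by
      rw [← Units.val_pow_eq_pow_val, ← hF1, Units.val_mul, Units.val_mul,
        spectrum.units_conjugate, Units.val_pow_eq_pow_val]
    refine aux_rou _ (Matrix.finite_spectrum _) (spectrum.zero_notMem ℂ (F x).isUnit) a b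
      (by omega) (by omega) ha ?_
    intro l hl
    have h1 : l ^ b ∈ spectrum ℂ ((F x : Matrix (Fin k) (Fin k) ℂ) ^ b) :=
      spectrum.pow_mem_pow _ _ hl
    rw [hs, spectrum.map_pow_of_pos _ ha] at h1
    exact h1
  obtain ⟨K, hK, r, hr⟩ := aux_unipotent x hspec
  set N := (x : Matrix (Fin k) (Fin k) ℤ) ^ K - 1 with hN
  have hu : ∀ c : ℕ, (1 + N) ^ c - 1 = ((x ^ c) ^ K : Matrix.GeneralLinearGroup (Fin k) ℤ).val - 1 := by
    intro c
    rw [hN, add_sub_cancel, Units.val_pow_eq_pow_val, Units.val_pow_eq_pow_val, ← pow_mul,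
      ← pow_mul, mul_comm]
  have hc : (1 + N) ^ a - 1 = g⁻¹.val * ((1 + N) ^ b - 1) * g.val := by
    rw [hu, hu, mul_sub, sub_mul, mul_one, ← h, conj_pow]
    simp [mul_assoc]
  have hcp : ∀ s : ℕ, ((1 + N) ^ a - 1) ^ s = g⁻¹.val * ((1 + N) ^ b - 1) ^ s * g.val := by
    intro s
    rw [hc]
    exact Units.conj_pow' g _ s
  have key : ∀ s : ℕ, N ^ (s + 1) = 0 → N = 0 := by
    intro s
    induction s with
    | zero => intro h; simpa using h
    | succ s ih =>
      intro h
      apply ih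
      have h1 := hcp (s + 1)
      rw [aux_unip N _ h, aux_unip N _ h] at h1
      refine aux_growth (N ^ (s+1))
        ((AddMonoidHom.mulLeft g⁻¹.val).comp (AddMonoidHom.mulRight g.val))
        (a ^ (s+1)) (b ^ (s+1)) (Nat.pow_pos ha) (Nat.pow_lt_pow_left hab (by omega)) ?_
      rw [nsmul_eq_mul, Nat.cast_pow, h1, ← map_nsmul]
      simp [mul_assoc]
  have hN0 : N = 0 := by
    apply key r
    rw [pow_succ, hr, zero_mul]
  rw [isOfFinOrder_iff_pow_eq_one]
  refine ⟨K, hK, ?_⟩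
  ext1
  rw [Units.val_pow_eq_pow_val, Units.val_one]
  exact sub_eq_zero.mp hN0

lemma aux_main {k : ℕ} (x g : Matrix.GeneralLinearGroup (Fin k) ℤ) (m n : ℤ)
    (hx : ¬ IsOfFinOrder x) (h : g * x ^ m * g⁻¹ = x ^ n) : |m| = |n| := by
  have hz : ∀ t : ℤ, x ^ t = 1 → t = 0 := by
    intro t ht
    by_contra h0
    exact hx (isOfFinOrder_iff_zpow_eq_one.mpr ⟨t, h0, ht⟩)
  by_cases hm : m = 0
  · subst hm
    rw [hz n (by rw [← h]; simp)]
  by_cases hn : n = 0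
  · subst hn
    rw [zpow_zero, conj_eq_one_iff] at h
    rw [hz m h]
  have h1 : g * x ^ (m * m) * g⁻¹ = x ^ (n * m) := by rw [zpow_mul, ← conj_zpow, h, ← zpow_mul]
  have h2 : g * x ^ (n * m) * g⁻¹ = x ^ (n * n) := by
    rw [mul_comm n m, zpow_mul, ← conj_zpow, h, ← zpow_mul]
  have h3 : (g * g) * x ^ (m.natAbs ^ 2) * (g * g)⁻¹ = x ^ (n.natAbs ^ 2) := by
    rw [← zpow_natCast, ← zpow_natCast]
    push_cast
    rw [sq_abs, sq_abs, sq, sq, ← h2, ← h1]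
    group
  have hm' : 0 < m.natAbs ^ 2 := Nat.pow_pos (Int.natAbs_pos.mpr hm)
  have hn' : 0 < n.natAbs ^ 2 := Nat.pow_pos (Int.natAbs_pos.mpr hn)
  rcases lt_trichotomy (m.natAbs ^ 2) (n.natAbs ^ 2) with hl | he | hl
  · exact absurd (aux_nat x _ _ _ hm' hl h3) hx
  · have := Nat.pow_left_injective (by norm_num : 2 ≠ 0) he
    have h9 : m.natAbs = n.natAbs := this
    rw [Int.abs_eq_natAbs, Int.abs_eq_natAbs, h9]
  · refine absurd (aux_nat x (g * g)⁻¹ _ _ hn' hl ?_) hx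
    rw [← h3]
    group

/-- Every subgroup of `GL(n, ℤ)` is balanced; equivalently, if `g * x^m * g⁻¹ = x^n`
holds in a group `G` with `x` of infinite order and `|m| ≠ |n|`, then `G` admits no
injective homomorphism into any `GL(n, ℤ)`. -/
theorem subgroup_GL_int_balanced :
    (∀ (n : ℕ) (H : Subgroup (Matrix.GeneralLinearGroup (Fin n) ℤ)), IsBalanced H) ∧
    (∀ (G : Type) [Group G] (x g : G) (m n : ℤ), ¬ IsOfFinOrder x →
      g * x ^ m * g⁻¹ = x ^ n → |m| ≠ |n| →
      ∀ (k : ℕ) (φ : G →* Matrix.GeneralLinearGroup (Fin k) ℤ),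
        ¬ Function.Injective φ) := by
  refine ⟨?_, ?_⟩
  · rintro n H x hx m k ⟨g, hg⟩
    refine aux_main (x : Matrix.GeneralLinearGroup (Fin n) ℤ) g m k ?_ ?_
    · exact fun hh => hx (Submonoid.isOfFinOrder_coe.mp hh)
    · exact_mod_cast congrArg Subtype.val hg
  · intro G _ x g m n hx h hmn k φ hφ
    apply hmn
    refine aux_main (φ x) (φ g) m n ?_ ?_
    · exact fun hh => hx (hφ.isOfFinOrder_iff.mp hh)
    · rw [← map_zpow, ← map_zpow, ← map_inv, ← map_mul, ← map_mul, h]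
end

section
/- Let a be an element of infinite order in a group G. Then: (i) the intersector I_G(a) = {g ∈ G : g⟨a⟩g⁻¹ ∩ ⟨a⟩ ≠ {1}} is a subgroup of G containing ⟨a⟩; (ii) if b ∈ G and a^k = b^l for some nonzero integers k, l, then I_G(a) = I_G(b); (iii) for any g ∈ G, I_G(g a g⁻¹) = g I_G(a) g⁻¹. -/
/-- The intersector of an element `a` in a group `G`: the set of `g ∈ G` such that
`g⟨a⟩g⁻¹ ∩ ⟨a⟩ ≠ {1}`. -/
def intersector {G : Type*} [Group G] (a : G) : Set G :=
  {g : G | ∃ x : G, x ∈ Subgroup.zpowers a ∧ x ≠ 1 ∧ g * x * g⁻¹ ∈ Subgroup.zpowers a}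

theorem aux_mem_iff {G : Type*} [Group G] (a : G) (ha : ¬ IsOfFinOrder a) (g : G) :
    g ∈ intersector a ↔ ∃ m n : ℤ, m ≠ 0 ∧ n ≠ 0 ∧ g * a ^ m * g⁻¹ = a ^ n := by
  have hz : ∀ m : ℤ, m ≠ 0 → a ^ m ≠ 1 := fun m hm h =>
    ha (isOfFinOrder_iff_zpow_eq_one.2 ⟨m, hm, h⟩)
  constructor
  · rintro ⟨x, ⟨m, rfl⟩, hx, ⟨n, hn⟩⟩
    simp only at hx hn
    refine ⟨m, n, ?_, ?_, hn.symm⟩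
    · rintro rfl
      simp at hx
    · rintro rfl
      apply hx
      rw [zpow_zero] at hn
      exact conj_eq_one_iff.1 hn.symm
  · rintro ⟨m, n, hm, hn, h⟩
    exact ⟨a ^ m, ⟨m, rfl⟩, hz m hm, ⟨n, h.symm⟩⟩

theorem aux_pow {G : Type*} [Group G] {a g : G} {m n : ℤ} (h : g * a ^ m * g⁻¹ = a ^ n)
    (k : ℤ) : g * a ^ (m * k) * g⁻¹ = a ^ (n * k) := by
  rw [zpow_mul, zpow_mul, ← h, conj_zpow]

theorem aux_le {G : Type*} [Group G] (a b : G) (ha : ¬ IsOfFinOrder a) (hb : ¬ IsOfFinOrder b)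
    (k l : ℤ) (hk : k ≠ 0) (hl : l ≠ 0) (h : a ^ k = b ^ l) :
    intersector a ⊆ intersector b := by
  intro g hg
  rw [aux_mem_iff a ha] at hg
  rw [aux_mem_iff b hb]
  obtain ⟨m, n, hm, hn, e⟩ := hg
  refine ⟨l * m, l * n, mul_ne_zero hl hm, mul_ne_zero hl hn, ?_⟩
  rw [zpow_mul, zpow_mul, ← h, ← zpow_mul, ← zpow_mul, mul_comm k, mul_comm k]
  exact aux_pow e k

theorem aux_conj {G : Type*} [Group G] (a g y : G) (hy : y ∈ intersector a) :
    g * y * g⁻¹ ∈ intersector (g * a * g⁻¹) := by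
  obtain ⟨x, ⟨m, rfl⟩, hx, ⟨n, hn⟩⟩ := hy
  simp only at hx hn
  refine ⟨(g * a * g⁻¹) ^ m, ⟨m, rfl⟩, ?_, ⟨n, ?_⟩⟩
  · rw [conj_zpow]
    exact fun h => hx (conj_eq_one_iff.1 h)
  · simp only [conj_zpow, hn]
    group

/-- For `a` of infinite order: (i) the intersector `I_G(a)` is a subgroup of `G`
containing `⟨a⟩`; (ii) if `a^k = b^l` with `k, l ≠ 0` then `I_G(a) = I_G(b)`;
(iii) `I_G(g a g⁻¹) = g I_G(a) g⁻¹`. -/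
theorem intersector_properties {G : Type*} [Group G] (a : G) (ha : ¬ IsOfFinOrder a) :
    (∃ S : Subgroup G, (S : Set G) = intersector a ∧ Subgroup.zpowers a ≤ S) ∧
    (∀ (b : G) (k l : ℤ), k ≠ 0 → l ≠ 0 → a ^ k = b ^ l →
      intersector a = intersector b) ∧
    (∀ g : G, intersector (g * a * g⁻¹) = (fun x => g * x * g⁻¹) '' intersector a) := by
  refine ⟨⟨{ carrier := intersector a, one_mem' := ?_, mul_mem' := ?_, inv_mem' := ?_ }, rfl, ?_⟩,
    ?_, ?_⟩
  · intro x y hx hy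
    rw [aux_mem_iff a ha] at hx hy ⊢
    obtain ⟨m, n, hm, hn, e⟩ := hx
    obtain ⟨p, q, hp, hq, f⟩ := hy
    refine ⟨p * m, n * q, mul_ne_zero hp hm, mul_ne_zero hn hq, ?_⟩
    rw [← aux_pow e q, mul_comm m q, ← aux_pow f m]
    group
  · rw [aux_mem_iff a ha]
    exact ⟨1, 1, one_ne_zero, one_ne_zero, by simp⟩
  · intro x hx
    rw [aux_mem_iff a ha] at hx ⊢
    obtain ⟨m, n, hm, hn, e⟩ := hx
    refine ⟨n, m, hn, hm, ?_⟩
    rw [← e]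
    group
  · rintro x ⟨j, rfl⟩
    change a ^ j ∈ intersector a
    rw [aux_mem_iff a ha]
    exact ⟨1, 1, one_ne_zero, one_ne_zero, by group⟩
  · intro b k l hk hl h
    have hb : ¬ IsOfFinOrder b := by
      intro hb
      obtain ⟨n, hn, e⟩ := isOfFinOrder_iff_zpow_eq_one.1 hb
      refine ha (isOfFinOrder_iff_zpow_eq_one.2 ⟨k * n, mul_ne_zero hk hn, ?_⟩)
      rw [zpow_mul, h, ← zpow_mul, mul_comm, zpow_mul, e, one_zpow]
    exact Set.Subset.antisymm (aux_le a b ha hb k l hk hl h) (aux_le b a hb ha l k hl hk h.symm)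
  · intro g
    ext y
    constructor
    · intro hy
      have := aux_conj _ g⁻¹ y hy
      refine ⟨g⁻¹ * y * g⁻¹⁻¹, ?_, by group⟩
      have e : g⁻¹ * (g * a * g⁻¹) * g⁻¹⁻¹ = a := by group
      rwa [e] at this
    · rintro ⟨x, hx, rfl⟩
      exact aux_conj a g x hx
end

section
/- Let r, s be nonzero coprime integers with |r| ≠ |s| and let G_{r,s} = A ⋊ ℤ be the associated semidirect product. If φ is a surjective homomorphism from G_{r,s} onto a group Q such that the image φ((1, 0)) of the element (1, 0) (where 1 ∈ A ⊆ ℚ) has infinite order, then φ is an isomorphism. -/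
/-- The rational `s / r` as a unit of `ℚ` (junk value `1` if `s / r = 0`). -/
def grsUnit (r s : ℤ) : ℚˣ :=
  if h : ((s : ℚ) / (r : ℚ)) = 0 then 1 else Units.mk0 _ h

/-- Multiplication by `s / r` as an automorphism of the additive group `ℚ`,
viewed multiplicatively. -/
def grsAut (r s : ℤ) : MulAut (Multiplicative ℚ) :=
  AddEquiv.toMultiplicative (DistribMulAction.toAddAut ℚˣ ℚ (grsUnit r s))

/-- The action of `ℤ` on `ℚ` in which the generator acts by multiplication by `s / r`. -/
def grsAction (r s : ℤ) : Multiplicative ℤ →* MulAut (Multiplicative ℚ) :=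
  zpowersHom (MulAut (Multiplicative ℚ)) (grsAut r s)

/-- The ambient semidirect product `ℚ ⋊ ℤ`, with the generator of `ℤ` acting on `ℚ`
by multiplication by `s / r`. -/
abbrev GrsAmbient (r s : ℤ) : Type :=
  SemidirectProduct (Multiplicative ℚ) (Multiplicative ℤ) (grsAction r s)

/-- The element `(1, e)` of `ℚ ⋊ ℤ`. -/
def grsA (r s : ℤ) : GrsAmbient r s :=
  ⟨Multiplicative.ofAdd (1 : ℚ), 1⟩

/-- The element `(0, t)` of `ℚ ⋊ ℤ`. -/
def grsT (r s : ℤ) : GrsAmbient r s :=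
  ⟨1, Multiplicative.ofAdd (1 : ℤ)⟩

/-- The group `G_{r,s} = ℤ[1/(rs)] ⋊ ℤ`, realised as the subgroup of `ℚ ⋊ ℤ`
generated by the elements `(1, e)` and `(0, t)` (for coprime `r, s` the subgroup of
`ℚ` generated by the `ℤ`-orbit of `1` under multiplication by `s/r` is exactly
`ℤ[1/(rs)]`). -/
def Grs (r s : ℤ) : Subgroup (GrsAmbient r s) :=
  Subgroup.closure {grsA r s, grsT r s}

/-- The element `(1, e)` of `G_{r,s}`. -/
def grsOne (r s : ℤ) : Grs r s :=
  ⟨grsA r s, Subgroup.subset_closure (Set.mem_insert _ _)⟩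

theorem grsAction_one_aux (r s : ℤ) (n : Multiplicative ℤ) :
    (grsAction r s n) (Multiplicative.ofAdd (1 : ℚ)) =
      Multiplicative.ofAdd (((grsUnit r s) ^ (Multiplicative.toAdd n) : ℚˣ) : ℚ) := by
  let ψ : ℚˣ →* MulAut (Multiplicative ℚ) :=
    { toFun := fun u => AddEquiv.toMultiplicative (DistribMulAction.toAddAut ℚˣ ℚ u)
      map_one' := by
        ext x
        exact one_smul ℚˣ (Multiplicative.toAdd x)
      map_mul' := fun u v => by
        ext x
        exact mul_smul u v (Multiplicative.toAdd x) }
  have h1 : grsAction r s n = ψ (grsUnit r s) ^ (Multiplicative.toAdd n) := rfl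
  rw [h1, ← map_zpow]
  exact congrArg Multiplicative.ofAdd
    (mul_one (((grsUnit r s) ^ (Multiplicative.toAdd n) : ℚˣ) : ℚ))

theorem grs_left_aux (r s : ℤ) (Q : Type) [Group Q] (φ : Grs r s →* Q)
    (hord : ¬ IsOfFinOrder (φ (grsOne r s))) (g : Grs r s) (hg : φ g = 1)
    (h2 : g.1.right = 1) : g = 1 := by
  by_contra hne
  apply hord
  set x : ℚ := Multiplicative.toAdd g.1.left with hx
  have hgx : g.1 = SemidirectProduct.inl (Multiplicative.ofAdd x) := by
    ext
    · simp [hx]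
    · simp [h2]
  have hx0 : x ≠ 0 := by
    intro h0
    apply hne
    apply Subtype.ext
    rw [hgx, h0]
    simp
  have key : g ^ (x.den : ℤ) = grsOne r s ^ (x.num : ℤ) := by
    apply Subtype.ext
    have h1 : (grsOne r s).1 = SemidirectProduct.inl (Multiplicative.ofAdd (1:ℚ)) := rfl
    rw [Subgroup.coe_zpow, Subgroup.coe_zpow, hgx, h1, ← map_zpow SemidirectProduct.inl,
      ← map_zpow SemidirectProduct.inl, ← ofAdd_zsmul,
      ← ofAdd_zsmul]
    congr 2
    simp [Rat.den_mul_eq_num]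
  rw [isOfFinOrder_iff_zpow_eq_one]
  refine ⟨x.num, by simpa using hx0, ?_⟩
  rw [← map_zpow, ← key, map_zpow, hg, one_zpow]

/-- If `r, s` are nonzero coprime integers with `|r| ≠ |s|` and `φ` is a surjective
homomorphism from `G_{r,s}` onto a group `Q` such that the image of the element
`(1, e)` has infinite order, then `φ` is an isomorphism. -/
theorem grs_surjective_hom_is_iso (r s : ℤ) (hr : r ≠ 0) (hs : s ≠ 0)
    (hco : IsCoprime r s) (hne : |r| ≠ |s|)
    (Q : Type) [Group Q] (φ : Grs r s →* Q) (hsurj : Function.Surjective φ)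
    (hord : ¬ IsOfFinOrder (φ (grsOne r s))) :
    Function.Bijective φ := by
  refine ⟨?_, hsurj⟩
  rw [injective_iff_map_eq_one]
  intro g hg
  have hk : φ (g * grsOne r s * g⁻¹ * (grsOne r s)⁻¹) = 1 := by simp [hg]
  have hc := grs_left_aux r s Q φ hord _ hk (by
    have h1 : (grsOne r s).1.right = 1 := rfl
    simp [h1])
  have hcomm : g * grsOne r s = grsOne r s * g := by
    rw [mul_inv_eq_one, mul_inv_eq_iff_eq_mul] at hc
    exact hc
  have hl : (g.1 * grsA r s).left = (grsA r s * g.1).left := by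
    have := congrArg (fun z : Grs r s => z.1.left) hcomm
    exact this
  have hl1 : (grsA r s).left = Multiplicative.ofAdd (1:ℚ) := rfl
  have hl2 : (grsA r s).right = 1 := rfl
  rw [SemidirectProduct.mul_left, SemidirectProduct.mul_left, hl1, hl2, map_one (grsAction r s), MulAut.one_apply,
    grsAction_one_aux, mul_comm, mul_right_cancel_iff] at hl
  have hl3 : ((grsUnit r s) ^ (Multiplicative.toAdd g.1.right) : ℚˣ) = (1 : ℚ) := by
    exact hl
  apply grs_left_aux r s Q φ hord g hg
  by_contra hn
  have hn' : Multiplicative.toAdd g.1.right ≠ 0 := hn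
  have hu : ((grsUnit r s : ℚˣ) : ℚ) = (s : ℚ) / r := by
    unfold grsUnit
    rw [dif_neg (by simp [hr, hs])]
    rfl
  rw [Units.val_zpow_eq_zpow_val, hu] at hl3
  have ha : |(s : ℚ) / r| ^ (Multiplicative.toAdd g.1.right) = 1 := by
    rw [← abs_zpow, hl3, abs_one]
  have ha' : |(s : ℚ) / r| = 1 := by
    by_contra h
    exact hn' ((zpow_eq_one_iff_right₀ (abs_nonneg _) h).1 ha)
  rw [abs_div, div_eq_one_iff_eq (by simp [hr])] at ha'
  apply hne
  exact_mod_cast ha'.symm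
end

section
/- Let G be a group containing elements a, g with a of infinite order, and suppose there are nonzero integers m, n with g a^m g⁻¹ = a^n, n divides m, and |m/n| > 1. Then G contains a subgroup isomorphic to the Baumslag–Solitar group BS(1, l) where l = m/n; indeed, replacing a by a^n, the subgroup ⟨a^n, g⟩ is isomorphic to BS(1, l). -/
/-- The Baumslag–Solitar group `BS(m, n) = ⟨a, t | t a^m t⁻¹ = a^n⟩`, presented on
generators indexed by `Bool`, with `t = of true` and `a = of false`. -/
abbrev BaumslagSolitar (m n : ℤ) : Type :=
  PresentedGroup
    ({FreeGroup.of true * (FreeGroup.of false) ^ m * (FreeGroup.of true)⁻¹ *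
        ((FreeGroup.of false) ^ n)⁻¹} : Set (FreeGroup Bool))

theorem bs_conj_pow {G : Type*} [Group G] (A t : G) (l : ℤ) (h : t * A * t⁻¹ = A ^ l)
    (j : ℕ) (k : ℤ) : t ^ j * A ^ k = A ^ (l ^ j * k) * t ^ j := by
  induction j generalizing k with
  | zero => simp
  | succ j ih =>
    have h1 : t * A ^ k = A ^ (l * k) * t := by
      rw [zpow_mul, ← h, conj_zpow]; group
    rw [pow_succ, mul_assoc, h1, ← mul_assoc, ih, mul_assoc, ← mul_assoc (l ^ j) l k, ← pow_succ l]

theorem bs_normal_form {G : Type*} [Group G] (A t : G) (l : ℤ) (h : t * A * t⁻¹ = A ^ l)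
    (x : G) (hx : x ∈ Subgroup.closure {A, t}) :
    ∃ (i j : ℕ) (k : ℤ), x = (t ^ i)⁻¹ * A ^ k * t ^ j := by
  induction hx using Subgroup.closure_induction_right with
  | one => exact ⟨0, 0, 0, by simp⟩
  | mul_right x hx y hy ih =>
    obtain ⟨i, j, k, rfl⟩ := ih
    rcases hy with rfl | rfl
    · refine ⟨i, j, k + l ^ j * 1, ?_⟩
      have := bs_conj_pow y t l h j 1
      rw [zpow_one] at this
      rw [mul_assoc, this, zpow_add]; simp only [mul_assoc]
    · exact ⟨i, j + 1, k, by rw [pow_succ]; simp only [mul_assoc]⟩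
  | mul_inv_cancel x hx y hy ih =>
    obtain ⟨i, j, k, rfl⟩ := ih
    rcases hy with rfl | rfl
    · refine ⟨i, j, k + l ^ j * (-1), ?_⟩
      have := bs_conj_pow y t l h j (-1)
      rw [zpow_neg_one] at this
      rw [mul_assoc, this, zpow_add]; simp only [mul_assoc]
    · cases j with
      | succ j => exact ⟨i, j, k, by rw [pow_succ]; simp only [mul_assoc, mul_inv_cancel, mul_one]⟩
      | zero =>
        refine ⟨i + 1, 0, l * k, ?_⟩
        have := bs_conj_pow A y l h 1 k
        simp only [pow_one] at this
        rw [eq_comm, ← eq_mul_inv_iff_mul_eq] at this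
        rw [this, pow_succ']; simp [mul_assoc]

theorem bs_no_commute {G : Type*} [Group G] (b t : G) (hb : ∀ k : ℤ, b ^ k = 1 → k = 0)
    (l : ℤ) (hl : 1 < |l|) (h : t * b * t⁻¹ = b ^ l) (d : ℕ) (k : ℤ) (hd : t ^ d = b ^ k) :
    d = 0 := by
  by_contra h0
  have h1 := bs_conj_pow b t l h d 1
  rw [hd, ← zpow_add, ← zpow_add, ← mul_inv_eq_one, ← zpow_neg, ← zpow_add] at h1
  have h2 := hb _ h1
  have h3 : l ^ d = 1 := by linarith
  have h4 : |l| ^ d = 1 := by rw [← abs_pow, h3]; simp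
  have := one_lt_pow₀ hl h0
  omega

/-- If `g * a^m * g⁻¹ = a^n` in `G` with `a` of infinite order, `n ∣ m` and
`|m / n| > 1`, then the subgroup `⟨a^n, g⟩` is isomorphic to `BS(1, m/n)`;
in particular `G` contains a subgroup isomorphic to `BS(1, m/n)`. -/
theorem bs_subgroup_of_integer_modulus {G : Type*} [Group G] (a g : G)
    (ha : ¬ IsOfFinOrder a) (m n : ℤ) (hm : m ≠ 0) (hn : n ≠ 0)
    (hrel : g * a ^ m * g⁻¹ = a ^ n) (hdvd : n ∣ m) (habs : 1 < |m / n|) :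
    Nonempty ((Subgroup.closure {a ^ n, g} : Subgroup G) ≃* BaumslagSolitar 1 (m / n)) ∧
    ∃ H : Subgroup G, Nonempty (H ≃* BaumslagSolitar 1 (m / n)) := by
  obtain ⟨l, rfl⟩ := hdvd
  rw [Int.mul_ediv_cancel_left _ hn] at *
  suffices hh : Nonempty ((Subgroup.closure {a ^ n, g} : Subgroup G) ≃* BaumslagSolitar 1 l) from
    ⟨hh, _, hh⟩
  have hb : ∀ k : ℤ, (a ^ n) ^ k = 1 → k = 0 := by
    intro k hk
    rw [← zpow_mul] at hk
    by_contra hk0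
    exact ha (isOfFinOrder_iff_zpow_eq_one.2 ⟨n * k, mul_ne_zero hn hk0, hk⟩)
  rw [zpow_mul] at hrel
  generalize a ^ n = b at *
  have hr : g⁻¹ * b * g⁻¹⁻¹ = b ^ l := by
    conv_lhs => rw [← hrel]
    group
  let f : Bool → G := fun x => if x then g⁻¹ else b
  have hf : ∀ r ∈ ({FreeGroup.of true * (FreeGroup.of false) ^ (1 : ℤ) * (FreeGroup.of true)⁻¹ *
        ((FreeGroup.of false) ^ l)⁻¹} : Set (FreeGroup Bool)), FreeGroup.lift f r = 1 := by
    rintro r rfl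
    simp only [map_mul, map_inv, map_zpow, FreeGroup.lift_apply_of, zpow_one]
    rw [mul_inv_eq_one]
    simpa [f] using hr
  let φ : BaumslagSolitar 1 l →* G := PresentedGroup.toGroup hf
  let T : BaumslagSolitar 1 l := PresentedGroup.of true
  let A : BaumslagSolitar 1 l := PresentedGroup.of false
  have hT : φ T = g⁻¹ := PresentedGroup.toGroup.of hf
  have hA : φ A = b := PresentedGroup.toGroup.of hf
  have hTA : T * A * T⁻¹ = A ^ l := by
    have := PresentedGroup.one_of_mem (rels := ({FreeGroup.of true * (FreeGroup.of false) ^ (1 : ℤ) * (FreeGroup.of true)⁻¹ *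
        ((FreeGroup.of false) ^ l)⁻¹} : Set (FreeGroup Bool))) (Set.mem_singleton _)
    simp only [map_mul, map_inv, map_zpow, zpow_one] at this
    exact mul_inv_eq_one.1 this
  have hcl : Subgroup.closure {A, T} = ⊤ := by
    rw [← PresentedGroup.closure_range_of]
    congr 1
    ext x
    simp [A, T]
  have hinj : Function.Injective φ := by
    rw [injective_iff_map_eq_one]
    intro x hx
    obtain ⟨i, j, k, rfl⟩ := bs_normal_form A T l hTA x (hcl ▸ Subgroup.mem_top x)
    simp only [map_mul, map_inv, map_pow, map_zpow, hT, hA] at hx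
    generalize g⁻¹ = t at *
    have hx' : b ^ k = t ^ i * (t ^ j)⁻¹ := by
      rw [eq_mul_inv_iff_mul_eq]
      rw [mul_assoc, inv_mul_eq_one] at hx
      exact hx.symm
    have hij : i = j := by
      rcases le_total i j with hle | hle
      · obtain ⟨d, rfl⟩ := Nat.exists_eq_add_of_le hle
        have := bs_no_commute b t hb l habs hr d (-k) (by rw [zpow_neg, hx']; group)
        omega
      · obtain ⟨d, rfl⟩ := Nat.exists_eq_add_of_le hle
        have := bs_no_commute b t hb l habs hr d k (by rw [hx']; group)
        omega
    subst hij
    have : k = 0 := hb k (by rw [hx']; group)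
    subst this
    group
  have hrange : φ.range = Subgroup.closure {b, g} := by
    rw [MonoidHom.range_eq_map, ← hcl, MonoidHom.map_closure, Set.image_pair, hT, hA]
    apply le_antisymm <;> rw [Subgroup.closure_le] <;> rintro x (rfl | rfl)
    · exact Subgroup.subset_closure (by simp)
    · exact inv_mem (Subgroup.subset_closure (by simp))
    · exact Subgroup.subset_closure (by simp)
    · exact inv_mem_iff.1 (Subgroup.subset_closure (by simp))
  rw [← hrange]
  exact ⟨(MonoidHom.ofInjective hinj).symm⟩
end

section
/- Let G be a residually finite group which is not balanced. Then G contains a subgroup isomorphic to G_{r,s} for some nonzero coprime integers r, s with |r| ≠ |s|. Indeed, if g a^r g⁻¹ = a^s in G with a of infinite order and r, s nonzero coprime with |r| ≠ |s|, then ⟨a, g⟩ ≅ G_{r,s}. -/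
/-- A group is residually finite if every nontrivial element survives in some finite
quotient, i.e. avoids some normal subgroup of finite index. -/
def ResiduallyFinite (G : Type*) [Group G] : Prop :=
  ∀ g : G, g ≠ 1 → ∃ N : Subgroup G, N.Normal ∧ N.FiniteIndex ∧ g ∉ N


lemma grs_aux_coprime {F : Type*} [Group F] (a g : F) (r s : ℤ) (hc : IsCoprime r s)
    (h : g * a ^ r * g⁻¹ = a ^ s) (ho : 0 < orderOf a) : IsCoprime r (orderOf a : ℤ) := by
  rw [Int.isCoprime_iff_gcd_eq_one]
  set d : ℕ := Int.gcd r (orderOf a) with hd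
  obtain ⟨u, hu⟩ : (d : ℤ) ∣ r := Int.gcd_dvd_left ..
  obtain ⟨e, he⟩ : (d : ℤ) ∣ (orderOf a : ℤ) := Int.gcd_dvd_right ..
  have h1 : a ^ (r * e) = 1 := by
    rw [← orderOf_dvd_iff_zpow_eq_one, he, hu]
    exact ⟨u, by ring⟩
  have h2 : a ^ (s * e) = 1 := by
    rw [zpow_mul, ← h, conj_zpow, ← zpow_mul, h1]; simp
  rw [← orderOf_dvd_iff_zpow_eq_one, he] at h2
  have he0 : e ≠ 0 := by rintro rfl; rw [mul_zero] at he; omega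
  have h3 : (d : ℤ) ∣ s := Int.dvd_of_mul_dvd_mul_right he0 h2
  have h4 : IsUnit (d : ℤ) := hc.isUnit_of_dvd' ⟨u, hu⟩ h3
  have := Int.isUnit_iff.1 h4
  omega

lemma grs_aux_conj {F : Type*} [Group F] (a g : F) (r s : ℤ) (hc : IsCoprime r s)
    (h : g * a ^ r * g⁻¹ = a ^ s) (ho : 0 < orderOf a) (b : F) (hb : b ∈ Subgroup.zpowers a) :
    g * b * g⁻¹ ∈ Subgroup.zpowers a := by
  obtain ⟨k, rfl⟩ := hb
  obtain ⟨u, v, huv⟩ := grs_aux_coprime a g r s hc h ho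
  have h1 : a = (a ^ r) ^ u := by
    rw [← zpow_mul]
    conv_lhs => rw [← zpow_one a, ← huv, zpow_add, zpow_mul' a v, zpow_natCast, pow_orderOf_eq_one,
      one_zpow, mul_one, mul_comm u]
  refine ⟨s * u * k, ?_⟩
  show a ^ (s * u * k) = g * a ^ k * g⁻¹
  conv_rhs => rw [h1]
  rw [← conj_zpow, ← conj_zpow, h, zpow_mul, zpow_mul]

/-- `b` lies in the cyclic group generated by `a` modulo every finite index normal subgroup. -/
def GrsQ {G : Type*} [Group G] (a b : G) : Prop :=
  ∀ N : Subgroup G, ∀ _ : N.Normal, N.FiniteIndex →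
    (b : G ⧸ N) ∈ Subgroup.zpowers (a : G ⧸ N)

lemma GrsQ.commute {G : Type*} [Group G] (hrf : ResiduallyFinite G) {a b : G} (h : GrsQ a b) :
    Commute a b := by
  by_contra hne
  have : a * b * (b * a)⁻¹ ≠ 1 := fun h' => hne (mul_inv_eq_one.1 h')
  obtain ⟨N, hN, hf, hx⟩ := hrf _ this
  apply hx
  rw [← QuotientGroup.eq_one_iff]
  obtain ⟨k, hk⟩ := h N hN hf
  have hk : (a : G ⧸ N) ^ k = b := hk
  rw [QuotientGroup.mk_mul, QuotientGroup.mk_inv, QuotientGroup.mk_mul, QuotientGroup.mk_mul,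
    mul_inv_eq_one, ← hk]
  exact ((Commute.refl (a : G ⧸ N)).zpow_right k).eq

lemma grs_quot_rel {G : Type*} [Group G] {a g : G} {r s : ℤ}
    (h : g * a ^ r * g⁻¹ = a ^ s) (N : Subgroup G) [N.Normal] :
    (g : G ⧸ N) * (a : G ⧸ N) ^ r * (g : G ⧸ N)⁻¹ = (a : G ⧸ N) ^ s := by
  have := congrArg (QuotientGroup.mk' N) h
  simp only [map_mul, map_zpow, map_inv] at this
  exact this

lemma GrsQ.conj {G : Type*} [Group G] {a g b : G} {r s : ℤ} (hc : IsCoprime r s)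
    (h : g * a ^ r * g⁻¹ = a ^ s) (hb : GrsQ a b) : GrsQ a (g * b * g⁻¹) := by
  intro N hN hf
  exact grs_aux_conj (a : G ⧸ N) (g : G ⧸ N) r s hc (grs_quot_rel h N) (orderOf_pos _) _ (hb N hN hf)

lemma GrsQ.torsion {G : Type*} [Group G] (hrf : ResiduallyFinite G) {a g b : G} {r s : ℤ}
    (hc : IsCoprime r s) (h : g * a ^ r * g⁻¹ = a ^ s) (h' : g⁻¹ * a ^ s * g⁻¹⁻¹ = a ^ r)
    (hb : GrsQ a b) (j : ℕ) (hj : b ^ ((r * s) ^ j) = 1) : b = 1 := by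
  by_contra hne
  obtain ⟨N, hN, hf, hx⟩ := hrf _ hne
  apply hx
  rw [← QuotientGroup.eq_one_iff]
  have c1 := grs_aux_coprime (a : G ⧸ N) (g : G ⧸ N) r s hc (grs_quot_rel h N) (orderOf_pos _)
  have c2 := grs_aux_coprime (a : G ⧸ N) ((g⁻¹ : G) : G ⧸ N) s r hc.symm (grs_quot_rel h' N)
    (orderOf_pos _)
  obtain ⟨u, v, huv⟩ := (c1.mul_left c2).pow_left (m := j)
  have e1 : (b : G ⧸ N) ^ ((r * s) ^ j) = 1 := by
    have := congrArg (QuotientGroup.mk' N) hj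
    simp only [map_zpow, map_one] at this
    exact this
  have e2 : (b : G ⧸ N) ^ (orderOf (a : G ⧸ N) : ℤ) = 1 := by
    obtain ⟨k, hk⟩ := hb N hN hf
    have hk : (a : G ⧸ N) ^ k = b := hk
    rw [← hk, ← zpow_mul, mul_comm, zpow_mul, zpow_natCast, pow_orderOf_eq_one, one_zpow]
  rw [← zpow_one (b : G ⧸ N), ← huv, zpow_add, zpow_mul', zpow_mul', e1, e2]
  simp

/-- `b` behaves like the rational number `q` relative to `a`. -/
def GrsP {G : Type*} [Group G] (a : G) (r s : ℤ) (b : G) (q : ℚ) : Prop :=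
  GrsQ a b ∧ ∃ (j : ℕ) (m : ℤ), ((r : ℚ) * s) ^ j * q = m ∧ b ^ ((r * s) ^ j) = a ^ m

lemma GrsP.one {G : Type*} [Group G] (a : G) (r s : ℤ) : GrsP a r s 1 0 :=
  ⟨fun _ _ _ => Subgroup.one_mem _, 0, 0, by simp, by simp⟩

lemma GrsP.zpow_mul {G : Type*} [Group G] (hrf : ResiduallyFinite G) {a : G} {r s : ℤ} {b : G}
    {q : ℚ} (h : GrsP a r s b q) (n : ℤ) : GrsP a r s (a ^ n * b) (n + q) := by
  obtain ⟨hQ, j, m, h1, h2⟩ := h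
  refine ⟨fun N hN hf => ?_, j, (r * s) ^ j * n + m, ?_, ?_⟩
  · exact Subgroup.mul_mem _ (Subgroup.mem_zpowers_iff.2 ⟨n, rfl⟩) (hQ N hN hf)
  · push_cast
    rw [mul_add, h1]
  · rw [((hQ.commute hrf).zpow_left n).mul_zpow, h2, ← _root_.zpow_mul, ← zpow_add, mul_comm n]

lemma GrsP.conj {G : Type*} [Group G] {a g : G} {r s : ℤ} {b : G} {q : ℚ}
    (hr : r ≠ 0) (hc : IsCoprime r s)
    (h : g * a ^ r * g⁻¹ = a ^ s) (hb : GrsP a r s b q) :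
    GrsP a r s (g * b * g⁻¹) ((s / r : ℚ) * q) := by
  obtain ⟨hQ, j, m, h1, h2⟩ := hb
  refine ⟨hQ.conj hc h, j + 1, s * (s * m), ?_, ?_⟩
  · push_cast
    rw [← h1]
    have : (r : ℚ) ≠ 0 := by exact_mod_cast hr
    field_simp
    ring
  · rw [pow_succ, conj_zpow, _root_.zpow_mul, h2, ← _root_.zpow_mul,
      show m * (r * s) = r * (s * m) by ring, _root_.zpow_mul, ← conj_zpow, h, ← _root_.zpow_mul]

lemma GrsP.swap {G : Type*} [Group G] {a : G} {r s : ℤ} {b : G} {q : ℚ}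
    (hb : GrsP a r s b q) : GrsP a s r b q := by
  obtain ⟨hQ, j, m, h1, h2⟩ := hb
  exact ⟨hQ, j, m, by rw [mul_comm (s : ℚ), h1], by rw [mul_comm s, h2]⟩

lemma grsUnit_val (r s : ℤ) (hr : r ≠ 0) (hs : s ≠ 0) : ((grsUnit r s : ℚˣ) : ℚ) = s / r := by
  have : ((s : ℚ) / (r : ℚ)) ≠ 0 := by
    apply div_ne_zero <;> exact_mod_cast ‹_›
  simp [grsUnit, this]

lemma grsAut_apply (r s : ℤ) (hr : r ≠ 0) (hs : s ≠ 0) (q : Multiplicative ℚ) :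
    (grsAut r s q).toAdd = (s / r : ℚ) * q.toAdd := by
  rw [← grsUnit_val r s hr hs]; rfl

lemma grsAut_inv_apply (r s : ℤ) (hr : r ≠ 0) (hs : s ≠ 0) (q : Multiplicative ℚ) :
    ((grsAut r s)⁻¹ q).toAdd = (r / s : ℚ) * q.toAdd := by
  have h := grsAut_apply r s hr hs ((grsAut r s)⁻¹ q)
  rw [MulAut.apply_inv_self] at h
  rw [h]
  have : (r : ℚ) ≠ 0 := by exact_mod_cast hr
  have : (s : ℚ) ≠ 0 := by exact_mod_cast hs
  field_simp

lemma grsT_mul_left (r s : ℤ) (y : GrsAmbient r s) :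
    (grsT r s * y).left = grsAut r s y.left := by
  rw [SemidirectProduct.mul_left]
  simp only [grsT, grsAction, zpowersHom_apply, one_mul, toAdd_ofAdd, zpow_one]

lemma grsT_inv_mul_left (r s : ℤ) (y : GrsAmbient r s) :
    ((grsT r s)⁻¹ * y).left = (grsAut r s)⁻¹ y.left := by
  rw [SemidirectProduct.mul_left, SemidirectProduct.inv_left, SemidirectProduct.inv_right]
  simp only [grsT, grsAction, zpowersHom_apply, inv_one, map_one, one_mul, toAdd_inv, toAdd_ofAdd,
    zpow_neg, zpow_one]

/-- The graph subgroup. -/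
def GrsK {G : Type*} [Group G] (a g : G) (r s : ℤ) : Subgroup (G × GrsAmbient r s) :=
  Subgroup.closure {(a, grsA r s), (g, grsT r s)}

lemma grsK_inv {G : Type*} [Group G] (hrf : ResiduallyFinite G) (a g : G) (r s : ℤ)
    (hr : r ≠ 0) (hs : s ≠ 0) (hc : IsCoprime r s)
    (h : g * a ^ r * g⁻¹ = a ^ s) (h' : g⁻¹ * a ^ s * g⁻¹⁻¹ = a ^ r)
    (z : G × GrsAmbient r s) (hz : z ∈ GrsK a g r s) :
    GrsP a r s (z.1 * g ^ (-z.2.right.toAdd)) z.2.left.toAdd := by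
  induction hz using Subgroup.closure_induction_left with
  | one => simpa using GrsP.one a r s
  | mul_left x hx y hy ih =>
    rcases hx with rfl | rfl
    · have := ih.zpow_mul hrf 1
      simpa [grsA, mul_assoc] using this
    · have := ih.conj hr hc h
      convert this using 1
      · simp [grsT, mul_assoc, zpow_add]
        try group
      · rw [Prod.snd_mul, grsT_mul_left, grsAut_apply r s hr hs]
  | inv_mul_cancel x hx y hy ih =>
    rcases hx with rfl | rfl
    · have := ih.zpow_mul hrf (-1)
      simpa [grsA, mul_assoc] using this
    · have := (ih.swap.conj hs hc.symm h').swap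
      convert this using 1
      · simp [grsT, mul_assoc, zpow_add]
        try group
      · rw [Prod.snd_mul, Prod.snd_inv, grsT_inv_mul_left, grsAut_inv_apply r s hr hs]

lemma grs_conj_npow {G : Type*} [Group G] (a g : G) (r s : ℤ) (h : g * a ^ r * g⁻¹ = a ^ s)
    (n : ℕ) : g ^ n * a ^ (r ^ n) * (g ^ n)⁻¹ = a ^ (s ^ n) := by
  induction n with
  | zero => simp
  | succ n ih =>
    calc g ^ (n+1) * a ^ (r ^ (n+1)) * (g ^ (n+1))⁻¹
        = g * (g ^ n * a ^ (r ^ n) * (g ^ n)⁻¹) ^ r * g⁻¹ := by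
          rw [conj_zpow, ← zpow_mul, ← pow_succ, pow_succ' g]; group
      _ = (g * a ^ r * g⁻¹) ^ (s ^ n) := by rw [ih, ← zpow_mul, mul_comm, zpow_mul, conj_zpow]
      _ = _ := by rw [h, ← zpow_mul, pow_succ']

lemma grs_inj_zpow {G : Type*} [Group G] {a : G} (ha : ¬ IsOfFinOrder a) {m n : ℤ}
    (h : a ^ m = a ^ n) : m = n :=
  injective_zpow_iff_not_isOfFinOrder.2 ha h

lemma grs_commute_zero {G : Type*} [Group G] (a g : G) (r s : ℤ) (ha : ¬ IsOfFinOrder a)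
    (hrs : |r| ≠ |s|) (h : g * a ^ r * g⁻¹ = a ^ s) (k : ℤ) (hk : Commute (g ^ k) a) : k = 0 := by
  by_contra hk0
  have hk' : Commute (g ^ k.natAbs) a := by
    rcases Int.natAbs_eq k with e | e
    · rw [e, zpow_natCast] at hk; exact hk
    · rw [e, zpow_neg, zpow_natCast] at hk; exact Commute.inv_left_iff.1 hk
  have := grs_conj_npow a g r s h k.natAbs
  rw [(hk'.zpow_right _).eq, mul_inv_cancel_right] at this
  have e := grs_inj_zpow ha this
  apply hrs
  have e2 : |r| ^ k.natAbs = |s| ^ k.natAbs := by rw [← abs_pow, ← abs_pow, e]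
  exact (pow_left_inj₀ (abs_nonneg _) (abs_nonneg _) (by omega)).1 e2

theorem grs_second {G : Type*} [Group G] (hrf : ResiduallyFinite G)
    (a g : G) (r s : ℤ) (ha : ¬ IsOfFinOrder a) (hr : r ≠ 0) (hs : s ≠ 0) (hc : IsCoprime r s)
    (hrs : |r| ≠ |s|) (h : g * a ^ r * g⁻¹ = a ^ s) :
    Nonempty ((Subgroup.closure {a, g} : Subgroup G) ≃* Grs r s) := by
  have h' : g⁻¹ * a ^ s * g⁻¹⁻¹ = a ^ r := by rw [← h]; group
  let f1 : GrsK a g r s →* G := (MonoidHom.fst _ _).comp (GrsK a g r s).subtype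
  let f2 : GrsK a g r s →* GrsAmbient r s := (MonoidHom.snd _ _).comp (GrsK a g r s).subtype
  have i1 : Function.Injective f1 := by
    rw [injective_iff_map_eq_one]
    rintro ⟨⟨x, y⟩, hz⟩ hx
    change x = 1 at hx
    subst hx
    obtain ⟨hQ, j, m, e1, e2⟩ := grsK_inv hrf a g r s hr hs hc h h' _ hz
    dsimp only at e1 e2
    rw [one_mul, ← zpow_mul] at e2
    have hk := grs_commute_zero a g r s ha hrs h _
      (by rw [e2]; exact (Commute.refl a).zpow_left m)
    have hk0 : y.right.toAdd = 0 := by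
      have : (r * s) ^ j ≠ 0 := pow_ne_zero _ (mul_ne_zero hr hs)
      simpa [this] using hk
    rw [hk, zpow_zero] at e2
    have hm : m = 0 := grs_inj_zpow ha (by rw [← e2, zpow_zero])
    subst hm
    have : ((r : ℚ) * s) ^ j ≠ 0 := by
      apply pow_ne_zero; apply mul_ne_zero <;> exact_mod_cast ‹_›
    have hq : y.left.toAdd = 0 := by
      simpa [this, hr, hs] using e1
    have : y = 1 := SemidirectProduct.ext hq hk0
    subst this
    rfl
  have i2 : Function.Injective f2 := by
    rw [injective_iff_map_eq_one]
    rintro ⟨⟨x, y⟩, hz⟩ hy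
    change y = 1 at hy
    subst hy
    obtain ⟨hQ, j, m, e1, e2⟩ := grsK_inv hrf a g r s hr hs hc h h' _ hz
    have hm : m = 0 := by
      have : (m : ℚ) = 0 := by rw [← e1]; simp
      exact_mod_cast this
    subst hm
    rw [zpow_zero] at e2
    have := hQ.torsion hrf hc h h' j e2
    have hx : x = 1 := by simpa using this
    subst hx
    rfl
  have r1 : f1.range = Subgroup.closure {a, g} := by
    rw [MonoidHom.range_eq_map, ← Subgroup.map_map, ← MonoidHom.range_eq_map,
      Subgroup.range_subtype, GrsK, MonoidHom.map_closure, Set.image_pair]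
    rfl
  have r2 : f2.range = Grs r s := by
    rw [MonoidHom.range_eq_map, ← Subgroup.map_map, ← MonoidHom.range_eq_map,
      Subgroup.range_subtype, GrsK, MonoidHom.map_closure, Set.image_pair]
    rfl
  exact ⟨((MulEquiv.subgroupCongr r1).symm.trans (MonoidHom.ofInjective i1).symm).trans
    ((MonoidHom.ofInjective i2).trans (MulEquiv.subgroupCongr r2))⟩

/-- A residually finite group which is not balanced contains a subgroup isomorphic to
`G_{r,s}` for some nonzero coprime `r, s` with `|r| ≠ |s|`; indeed if
`g * a^r * g⁻¹ = a^s` with `a` of infinite order and `r, s` nonzero coprime with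
`|r| ≠ |s|`, then `⟨a, g⟩ ≅ G_{r,s}`. -/
theorem residually_finite_unbalanced_contains_grs {G : Type*} [Group G]
    (hrf : ResiduallyFinite G) :
    (¬ IsBalanced G → ∃ r s : ℤ, r ≠ 0 ∧ s ≠ 0 ∧ IsCoprime r s ∧ |r| ≠ |s| ∧
      ∃ H : Subgroup G, Nonempty (H ≃* Grs r s)) ∧
    (∀ (a g : G) (r s : ℤ), ¬ IsOfFinOrder a → r ≠ 0 → s ≠ 0 → IsCoprime r s →
      |r| ≠ |s| → g * a ^ r * g⁻¹ = a ^ s →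
      Nonempty ((Subgroup.closure {a, g} : Subgroup G) ≃* Grs r s)) := by
  refine ⟨fun hnb => ?_, fun a g r s ha hr hs hc hrs h =>
    grs_second hrf a g r s ha hr hs hc hrs h⟩
  unfold IsBalanced at hnb
  push Not at hnb
  obtain ⟨x, hx, m, n, ⟨g, hg⟩, hmn⟩ := hnb
  have hm : m ≠ 0 := by
    rintro rfl
    have : n = 0 := grs_inj_zpow hx (by rw [← hg]; simp)
    exact hmn (by rw [this])
  have hn : n ≠ 0 := by
    rintro rfl
    rw [zpow_zero, conj_eq_one_iff] at hg
    exact hm (grs_inj_zpow hx (by rw [hg, zpow_zero]))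
  obtain ⟨r, hr⟩ : ((Int.gcd m n : ℕ) : ℤ) ∣ m := Int.gcd_dvd_left ..
  obtain ⟨s, hs⟩ : ((Int.gcd m n : ℕ) : ℤ) ∣ n := Int.gcd_dvd_right ..
  have hd0 : ((Int.gcd m n : ℕ) : ℤ) ≠ 0 := by
    intro h0; rw [h0, zero_mul] at hr; exact hm hr
  have hb := Int.gcd_eq_gcd_ab m n
  generalize ((Int.gcd m n : ℕ) : ℤ) = d at *
  have hr0 : r ≠ 0 := by rintro rfl; simp at hr; exact hm hr
  have hs0 : s ≠ 0 := by rintro rfl; simp at hs; exact hn hs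
  have hc : IsCoprime r s := by
    refine ⟨Int.gcdA m n, Int.gcdB m n, mul_left_cancel₀ hd0 ?_⟩
    generalize Int.gcdA m n = u at *
    generalize Int.gcdB m n = v at *
    rw [mul_one]
    conv_rhs => rw [hb, hr, hs]
    ring
  have hrs : |r| ≠ |s| := by
    intro e; apply hmn; rw [hr, hs, abs_mul, abs_mul, e]
  have ha : ¬ IsOfFinOrder (x ^ d) := by
    intro hf
    obtain ⟨k, hk, hk1⟩ := isOfFinOrder_iff_pow_eq_one.1 hf
    rw [← zpow_natCast, ← zpow_mul] at hk1
    have : d * (k : ℤ) = 0 := grs_inj_zpow hx (by rw [hk1, zpow_zero])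
    rcases mul_eq_zero.1 this with h | h
    · exact hd0 h
    · omega
  exact ⟨r, s, hr0, hs0, hc, hrs, _, grs_second hrf (x ^ d) g r s ha hr0 hs0 hc hrs
    (by rw [← zpow_mul, ← zpow_mul, ← hr, ← hs, hg])⟩
end

section
/- Let r, s be coprime integers with |r| ≥ 2 and |s| ≥ 2. Then the group G_{r,s} contains no subgroup isomorphic to any Baumslag–Solitar group BS(m, n) (for any nonzero integers m, n). -/
lemma bs_lift {K : Type*} [Group K] (m n : ℤ) (x y : K) (h : y * x ^ m * y⁻¹ = x ^ n) :
    ∃ f : BaumslagSolitar m n →* K,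
      f (PresentedGroup.of false) = x ∧ f (PresentedGroup.of true) = y := by
  refine ⟨PresentedGroup.toGroup (f := fun b => if b then y else x) ?_, ?_, ?_⟩
  · intro w hw
    rw [Set.mem_singleton_iff] at hw
    subst hw
    simp [h]
  · simp
  · simp

lemma bs_rel (m n : ℤ) : (PresentedGroup.of true : BaumslagSolitar m n) *
    (PresentedGroup.of false : BaumslagSolitar m n) ^ m * (PresentedGroup.of true)⁻¹ =
    (PresentedGroup.of false) ^ n := by
  rw [← mul_inv_eq_one]
  exact PresentedGroup.one_of_mem (rels := ({FreeGroup.of true * (FreeGroup.of false) ^ m *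
    (FreeGroup.of true)⁻¹ * ((FreeGroup.of false) ^ n)⁻¹} : Set (FreeGroup Bool)))
    (Set.mem_singleton _)

lemma bs_hnn (m n : ℤ) (hm : m ≠ 0) (hn : n ≠ 0) :
    (PresentedGroup.of false : BaumslagSolitar m n) ≠ 1 ∧
    (¬ m ∣ 1 → ¬ n ∣ 1 →
      ¬ Commute (PresentedGroup.of true * PresentedGroup.of false * (PresentedGroup.of true)⁻¹)
        (PresentedGroup.of false : BaumslagSolitar m n)) := by
  have inj : ∀ k : ℤ, k ≠ 0 → Function.Injective
      (zpowersHom (Multiplicative ℤ) (Multiplicative.ofAdd k)) := by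
    intro k hk
    rw [injective_iff_map_eq_one]
    intro a ha
    have := congrArg Multiplicative.toAdd ha
    simp [zpowersHom_apply, hk] at this
    simpa using this
  have mem : ∀ k : ℤ, Multiplicative.ofAdd (1 : ℤ) ∈
      (zpowersHom (Multiplicative ℤ) (Multiplicative.ofAdd k)).range → k ∣ 1 := by
    rintro k ⟨a, ha⟩
    have := congrArg Multiplicative.toAdd ha
    simp [zpowersHom_apply] at this
    exact ⟨a.toAdd, by rw [← this, mul_comm]⟩
  let A := (zpowersHom (Multiplicative ℤ) (Multiplicative.ofAdd m)).range
  let B := (zpowersHom (Multiplicative ℤ) (Multiplicative.ofAdd n)).range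
  let eA := MonoidHom.ofInjective (inj m hm)
  let eB := MonoidHom.ofInjective (inj n hn)
  let φ : A ≃* B := eA.symm.trans eB
  have hφ : φ (eA (Multiplicative.ofAdd 1)) = eB (Multiplicative.ofAdd 1) := by
    simp [φ]
  let a : HNNExtension (Multiplicative ℤ) A B φ := HNNExtension.of (Multiplicative.ofAdd (1 : ℤ))
  let t : HNNExtension (Multiplicative ℤ) A B φ := HNNExtension.t
  have rel : t * a ^ m * t⁻¹ = a ^ n := by
    have := HNNExtension.equiv_eq_conj (φ := φ) (eA (Multiplicative.ofAdd 1))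
    rw [hφ] at this
    have e1 : ((eA (Multiplicative.ofAdd 1) : A) : Multiplicative ℤ)
        = (Multiplicative.ofAdd (1 : ℤ)) ^ m := by
      simp [eA, MonoidHom.ofInjective_apply, zpowersHom_apply, ← ofAdd_zsmul]
    have e2 : ((eB (Multiplicative.ofAdd 1) : B) : Multiplicative ℤ)
        = (Multiplicative.ofAdd (1 : ℤ)) ^ n := by
      simp [eB, MonoidHom.ofInjective_apply, zpowersHom_apply, ← ofAdd_zsmul]
    rw [e1, e2, map_zpow, map_zpow] at this
    exact this.symm
  obtain ⟨f, fa, ft⟩ := bs_lift m n a t rel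
  constructor
  · intro h
    rw [h, map_one] at fa
    have h1 : Multiplicative.ofAdd (1 : ℤ) = 1 :=
      HNNExtension.of_injective (φ := φ) (fa.symm.trans (map_one HNNExtension.of).symm)
    have := congrArg Multiplicative.toAdd h1
    simp at this
  · intro hm1 hn1 hc
    have hc' := hc.map f
    simp only [map_mul, map_inv, fa, ft] at hc'
    have hA : Multiplicative.ofAdd (1 : ℤ) ∉ A := fun h => hm1 (mem m h)
    have hB : Multiplicative.ofAdd (1 : ℤ) ∉ B := fun h => hn1 (mem n h)
    let w₁ : HNNExtension.NormalWord.ReducedWord (Multiplicative ℤ) A B :=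
      { head := 1
        toList := [(1, Multiplicative.ofAdd (1 : ℤ)), (-1, Multiplicative.ofAdd (1 : ℤ))]
        chain := by simp [hA] }
    let w₂ : HNNExtension.NormalWord.ReducedWord (Multiplicative ℤ) A B :=
      { head := Multiplicative.ofAdd (1 : ℤ)
        toList := [(1, Multiplicative.ofAdd (1 : ℤ)), (-1, 1)]
        chain := by simp [hA] }
    have hw : w₁.prod φ = w₂.prod φ := by
      have := hc'.eq
      simpa [w₁, w₂, HNNExtension.NormalWord.ReducedWord.prod, mul_assoc, a, t] using this
    have := (HNNExtension.ReducedWord.map_fst_eq_and_of_prod_eq φ hw).2 1 (by simp [w₁])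
    exact hB (by simpa [w₁, w₂] using this)

lemma grsAction_apply (r s : ℤ) (hr : r ≠ 0) (hs : s ≠ 0) (k : ℤ) (q : ℚ) :
    (grsAction r s (Multiplicative.ofAdd k) (Multiplicative.ofAdd q)).toAdd
      = ((s : ℚ) / r) ^ k * q := by
  have hc : (s : ℚ) / r ≠ 0 := by positivity
  have hu : ((grsUnit r s : ℚˣ) : ℚ) = (s : ℚ) / r := by simp [grsUnit, hr, hs]
  have h1 : ∀ q : ℚ, (grsAut r s (Multiplicative.ofAdd q)) =
      Multiplicative.ofAdd (((s : ℚ) / r) * q) := by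
    intro q
    rw [← hu]; rfl
  have h2 : ∀ q : ℚ, ((grsAut r s)⁻¹ (Multiplicative.ofAdd q)) =
      Multiplicative.ofAdd (((s : ℚ) / r)⁻¹ * q) := by
    intro q
    rw [MulAut.inv_apply, MulEquiv.symm_apply_eq, h1, mul_inv_cancel_left₀ hc]
  simp only [grsAction, zpowersHom_apply, toAdd_ofAdd]
  induction k using Int.induction_on generalizing q with
  | zero => simp
  | succ i ih =>
    rw [zpow_add_one, MulAut.mul_apply, h1, ih, zpow_add_one₀ hc, mul_assoc]
  | pred i ih =>
    rw [zpow_sub_one, MulAut.mul_apply, h2, ih, zpow_sub_one₀ hc, mul_assoc]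

lemma grs_pow_aux (r s : ℤ) (hco : IsCoprime r s) (hr : 2 ≤ |r|) (hs0 : s ≠ 0)
    (k : ℕ) (N : ℤ) (h : ((s : ℚ) / r) ^ k = N) : k = 0 := by
  by_contra hk
  have hr0 : r ≠ 0 := by rintro rfl; simp at hr
  have hr0' : (r : ℚ) ≠ 0 := by exact_mod_cast hr0
  rw [div_pow, div_eq_iff (pow_ne_zero _ hr0')] at h
  have h' : s ^ k = N * r ^ k := by exact_mod_cast h
  have hd : r ∣ s ^ k := h' ▸ Dvd.dvd.mul_left (dvd_pow_self r hk) N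
  have hu : IsUnit r := (hco.pow_right (n := k)).isUnit_of_dvd' dvd_rfl hd
  rw [Int.isUnit_iff_abs_eq] at hu
  omega

lemma grs_zpow_aux (r s : ℤ) (hco : IsCoprime r s) (hr : 2 ≤ |r|) (hs : 2 ≤ |s|)
    (k : ℤ) (N : ℤ) (h : ((s : ℚ) / r) ^ k = N) : k = 0 := by
  have hr0 : r ≠ 0 := by rintro rfl; simp at hr
  have hs0 : s ≠ 0 := by rintro rfl; simp at hs
  obtain ⟨j, rfl | rfl⟩ := k.eq_nat_or_neg
  · rw [zpow_natCast] at h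
    simpa using grs_pow_aux r s hco hr hs0 j N h
  · rw [zpow_neg, zpow_natCast, ← inv_pow, inv_div] at h
    simpa using grs_pow_aux s r hco.symm hs hr0 j N h

lemma grs_mul_left (r s : ℤ) (hr : r ≠ 0) (hs : s ≠ 0) (g h : GrsAmbient r s) :
    (g * h).left.toAdd = g.left.toAdd + ((s : ℚ) / r) ^ g.right.toAdd * h.left.toAdd := by
  rw [SemidirectProduct.mul_left, toAdd_mul]
  congr 1
  exact grsAction_apply r s hr hs g.right.toAdd h.left.toAdd

lemma grs_zpow_right (r s : ℤ) (g : GrsAmbient r s) (k : ℤ) :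
    (g ^ k).right.toAdd = k * g.right.toAdd := by
  have : (g ^ k).right = g.right ^ k := map_zpow SemidirectProduct.rightHom g k
  rw [this, toAdd_zpow, smul_eq_mul]

lemma grs_eq (r s : ℤ) (g h : GrsAmbient r s) (h1 : g.left.toAdd = h.left.toAdd)
    (h2 : g.right.toAdd = h.right.toAdd) : g = h :=
  SemidirectProduct.ext h1 h2

lemma grs_zpow_left (r s : ℤ) (g : GrsAmbient r s) (hg : g.right.toAdd = 0) (k : ℤ) :
    (g ^ k).left.toAdd = k * g.left.toAdd := by
  have e : g = SemidirectProduct.inl g.left := grs_eq _ _ _ _ rfl hg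
  have : g ^ k = SemidirectProduct.inl (g.left ^ k) := by
    rw [map_zpow, ← e]
  rw [this, SemidirectProduct.left_inl, toAdd_zpow, zsmul_eq_mul]

theorem grs_no_baumslag_solitar_subgroup (r s : ℤ) (hco : IsCoprime r s)
    (hr : 2 ≤ |r|) (hs : 2 ≤ |s|) :
    ∀ m n : ℤ, m ≠ 0 → n ≠ 0 →
      ∀ H : Subgroup (Grs r s), ¬ Nonempty (H ≃* BaumslagSolitar m n) := by
  rintro m n hm hn H ⟨e⟩
  have hr0 : r ≠ 0 := by rintro rfl; simp at hr
  have hs0 : s ≠ 0 := by rintro rfl; simp at hs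
  let ψ : BaumslagSolitar m n →* GrsAmbient r s :=
    (Grs r s).subtype.comp (H.subtype.comp e.symm.toMonoidHom)
  have hψ : Function.Injective ψ :=
    (Grs r s).subtype_injective.comp (H.subtype_injective.comp e.symm.injective)
  obtain ⟨E, Ea, Et⟩ := bs_lift m n (1 : Multiplicative ℤ) (Multiplicative.ofAdd 1) (by simp)
  obtain ⟨ha1, hcomm⟩ := bs_hnn m n hm hn
  have hrel := bs_rel m n
  generalize (PresentedGroup.of false : BaumslagSolitar m n) = a at *
  generalize (PresentedGroup.of true : BaumslagSolitar m n) = t at *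
  -- no nontrivial relation between powers
  have key : ∀ i j : ℤ, ψ a ^ i = ψ t ^ j → j = 0 := by
    intro i j hij
    rw [← map_zpow, ← map_zpow] at hij
    have h1 := congrArg E (hψ hij)
    rw [map_zpow, map_zpow, Ea, Et] at h1
    have := congrArg Multiplicative.toAdd h1
    simpa using this.symm
  have hrel' : ψ t * ψ a ^ m = ψ a ^ n * ψ t := by
    rw [← map_zpow, ← map_zpow, ← hrel, ← map_mul, ← map_mul]
    simp
  have hac : ψ a ≠ 1 := fun h => ha1 (hψ (by rw [h, map_one]))
  have hcomm' : ¬ m ∣ 1 → ¬ n ∣ 1 → ¬ Commute (ψ t * ψ a * (ψ t)⁻¹) (ψ a) := by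
    intro h1 h2 h3
    refine hcomm h1 h2 (hψ ?_)
    simpa using h3.eq
  generalize ψ a = x at *
  generalize ψ t = y at *
  have hZ := congrArg (fun g => g.right.toAdd) hrel'
  simp only [SemidirectProduct.mul_right, toAdd_mul, grs_zpow_right] at hZ
  by_cases hx : x.right.toAdd = 0
  · have hq : x.left.toAdd ≠ 0 := fun h => hac (grs_eq _ _ _ _ h hx)
    have hL := congrArg (fun g => g.left.toAdd) hrel'
    simp only [grs_mul_left r s hr0 hs0, grs_zpow_left _ _ _ hx, grs_zpow_right, hx, mul_zero,
      zpow_zero, one_mul] at hL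
    have hck : ((s : ℚ) / r) ^ y.right.toAdd * m = n := by
      apply mul_right_cancel₀ hq
      linarith
    by_cases hk : y.right.toAdd = 0
    · -- both in `ℚ`
      set p := y.left.toAdd with hp
      set q := x.left.toAdd with hqq
      have h0 : q.num * p.den = 0 := by
        apply key (p.num * q.den)
        apply grs_eq
        · rw [grs_zpow_left _ _ _ hx, grs_zpow_left _ _ _ hk, ← hp, ← hqq]
          have e1 := Rat.mul_den_eq_num p
          have e2 := Rat.mul_den_eq_num q
          push_cast
          rw [← e1, ← e2]; ring
        · rw [grs_zpow_right, grs_zpow_right, hx, hk]; simp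
      simp [hq] at h0
    · refine hcomm' ?_ ?_ ?_
      · intro h
        have : m * m = 1 := by
          rcases Int.isUnit_iff.1 (isUnit_of_dvd_one h) with rfl | rfl <;> rfl
        have this' : (m : ℚ) * m = 1 := by exact_mod_cast this
        apply hk
        apply grs_zpow_aux r s hco hr hs _ (n * m)
        push_cast
        rw [← hck, mul_assoc, this', mul_one]
      · intro h
        have : n * n = 1 := by
          rcases Int.isUnit_iff.1 (isUnit_of_dvd_one h) with rfl | rfl <;> rfl
        have this' : (n : ℚ) * n = 1 := by exact_mod_cast this
        apply hk
        rw [← neg_eq_zero]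
        apply grs_zpow_aux r s hco hr hs _ (m * n)
        have hc : ((s : ℚ) / r) ^ y.right.toAdd ≠ 0 := zpow_ne_zero _ (by positivity)
        rw [zpow_neg, inv_eq_iff_eq_inv]
        symm
        apply inv_eq_of_mul_eq_one_left
        push_cast
        rw [← mul_assoc, hck, this']
      · have hz : (y * x * y⁻¹).right.toAdd = 0 := by
          simp [hx]
        generalize y * x * y⁻¹ = v at *
        apply grs_eq
        · rw [grs_mul_left r s hr0 hs0, grs_mul_left r s hr0 hs0, hz, hx]
          simp [add_comm]
        · rw [SemidirectProduct.mul_right, SemidirectProduct.mul_right, mul_comm]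
  · have hmn : m = n := by
      apply mul_right_cancel₀ hx
      linarith
    subst hmn
    have c1 : Commute y (x ^ m) := hrel'
    have c2 : Commute (x ^ m) ((x ^ m) ^ y.right.toAdd * y ^ (-(m * x.right.toAdd))) :=
      ((Commute.refl _).zpow_right _).mul_right (c1.symm.zpow_right _)
    have hw0 : ((x ^ m) ^ y.right.toAdd * y ^ (-(m * x.right.toAdd))).right.toAdd = 0 := by
      rw [SemidirectProduct.mul_right, toAdd_mul]
      simp only [grs_zpow_right]
      ring
    have hw : (x ^ m) ^ y.right.toAdd * y ^ (-(m * x.right.toAdd)) = 1 := by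
      generalize (x ^ m) ^ y.right.toAdd * y ^ (-(m * x.right.toAdd)) = w at *
      apply grs_eq _ _ _ _ _ hw0
      have h3 := congrArg (fun g => g.left.toAdd) c2.eq
      simp only [grs_mul_left r s hr0 hs0, hw0, grs_zpow_right, zpow_zero, one_mul] at h3
      by_contra hne
      have hne' : w.left.toAdd ≠ 0 := hne
      have h4 : ((s : ℚ) / r) ^ (m * x.right.toAdd) = (1 : ℤ) := by
        apply mul_right_cancel₀ hne'
        push_cast
        linarith
      exact mul_ne_zero hm hx (grs_zpow_aux r s hco hr hs _ _ h4)
    have := key (m * y.right.toAdd) (m * x.right.toAdd) (by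
      rw [zpow_neg, mul_inv_eq_one] at hw
      rw [zpow_mul, hw])
    exact mul_ne_zero hm hx this
end

section
/- Let H be a nontrivial subgroup of a group G. Then: (i) if S ≤ H ≤ G with S nontrivial, then Mal_G(S) ≤ Mal_G(H) and Mal_H(S) ≤ Mal_G(S); (ii) Mal_G(H) is a malnormal subgroup of G; (iii) if M is any malnormal subgroup of G containing H, then M contains Mal_G(H). -/
/-- A subgroup `M` of `G` is malnormal if `g M g⁻¹ ∩ M ≠ {1}` implies `g ∈ M`. -/
def IsMalnormal {G : Type*} [Group G] (M : Subgroup G) : Prop :=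
  ∀ g : G, (∃ h : G, h ∈ M ∧ h ≠ 1 ∧ g * h * g⁻¹ ∈ M) → g ∈ M

/-- The full intersecting conjugate `F_G(H)`: the subgroup generated by the elements
`g` with `g H g⁻¹ ∩ H ≠ {1}`. -/
def fullIC {G : Type*} [Group G] (H : Subgroup G) : Subgroup G :=
  Subgroup.closure {g : G | ∃ h : G, h ∈ H ∧ h ≠ 1 ∧ g * h * g⁻¹ ∈ H}

/-- The iterates `F^k_G(H)` of the full intersecting conjugate. -/
def fullICIter {G : Type*} [Group G] (H : Subgroup G) : ℕ → Subgroup G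
  | 0 => H
  | k + 1 => fullIC (fullICIter H k)

/-- The malnormal closure `Mal_G(H) = ⋃ₖ F^k_G(H)` (an ascending union of subgroups). -/
def malClosure {G : Type*} [Group G] (H : Subgroup G) : Subgroup G :=
  ⨆ k : ℕ, fullICIter H k

theorem fullICIter_le_succ {G : Type*} [Group G] (H : Subgroup G) (k : ℕ) :
    fullICIter H k ≤ fullICIter H (k + 1) := by
  intro h hh
  by_cases h1 : h = 1
  · rw [h1]; exact one_mem _
  · exact Subgroup.subset_closure ⟨h, hh, h1, by simpa using hh⟩

theorem fullICIter_mono {G : Type*} [Group G] (H : Subgroup G) : Monotone (fullICIter H) :=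
  monotone_nat_of_le_succ (fullICIter_le_succ H)

theorem mem_malClosure {G : Type*} [Group G] (H : Subgroup G) (g : G) :
    g ∈ malClosure H ↔ ∃ k, g ∈ fullICIter H k :=
  Subgroup.mem_iSup_of_directed (fullICIter_mono H).directed_le

theorem le_malClosure {G : Type*} [Group G] (H : Subgroup G) : H ≤ malClosure H :=
  le_iSup (fullICIter H) 0

theorem malClosure_malnormal {G : Type*} [Group G] (H : Subgroup G) :
    IsMalnormal (malClosure H) := by
  rintro g ⟨h, hh, h1, hg⟩
  obtain ⟨a, ha⟩ := (mem_malClosure H _).1 hh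
  obtain ⟨b, hb⟩ := (mem_malClosure H _).1 hg
  refine (mem_malClosure H _).2 ⟨max a b + 1, Subgroup.subset_closure ⟨h, ?_, h1, ?_⟩⟩
  · exact fullICIter_mono H (le_max_left a b) ha
  · exact fullICIter_mono H (le_max_right a b) hb

theorem malClosure_le {G : Type*} [Group G] (H M : Subgroup G) (hM : IsMalnormal M)
    (h : H ≤ M) : malClosure H ≤ M := by
  refine iSup_le fun k => ?_
  induction k with
  | zero => exact h
  | succ k ih =>
    refine (Subgroup.closure_le M).2 ?_
    rintro g ⟨x, hx, h1, hg⟩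
    exact hM g ⟨x, ih hx, h1, ih hg⟩

/-- For a nontrivial subgroup `H` of `G`: (i) if `S ≤ H` is nontrivial then
`Mal_G(S) ≤ Mal_G(H)` and `Mal_H(S) ≤ Mal_G(S)`; (ii) `Mal_G(H)` is malnormal in `G`;
(iii) any malnormal subgroup of `G` containing `H` contains `Mal_G(H)`. -/
theorem malClosure_properties {G : Type*} [Group G] (H : Subgroup G) (hH : H ≠ ⊥) :
    (∀ S : Subgroup G, S ≠ ⊥ → S ≤ H →
      malClosure S ≤ malClosure H ∧
      (malClosure (S.subgroupOf H)).map H.subtype ≤ malClosure S) ∧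
    IsMalnormal (malClosure H) ∧
    (∀ M : Subgroup G, IsMalnormal M → H ≤ M → malClosure H ≤ M) := by
  refine ⟨fun S _ hS => ⟨?_, ?_⟩, malClosure_malnormal H, fun M hM h => malClosure_le H M hM h⟩
  · exact malClosure_le S _ (malClosure_malnormal H) (hS.trans (le_malClosure H))
  · rw [Subgroup.map_le_iff_le_comap]
    refine malClosure_le _ _ ?_ ?_
    · rintro g ⟨x, hx, h1, hg⟩
      refine malClosure_malnormal S (g : G) ⟨(x : G), hx, ?_, hg⟩
      simpa using h1
    · intro x hx
      exact le_malClosure S hx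
end

section
/- Let G be the HNN extension of a group H with stable letter t and associated subgroups A, B of H, where t x t⁻¹ = φ(x) for an isomorphism φ : A ≃ B, and identify H with its image in G. Let g, g' ∈ H be conjugate in G. If no conjugate of g by an element of H lies in A ∪ B, then no conjugate of g' by an element of H lies in A ∪ B, and g is conjugate to g' by an element of H. -/
/-- Collins' criterion (simplified form): let `G` be the HNN extension of `H` with
associated subgroups `A, B ≤ H` and isomorphism `φ : A ≃* B`, and let `g, g' ∈ H` be
conjugate in `G`.  If no conjugate of `g` by an element of `H` lies in `A ∪ B`, then
the same holds for `g'`, and `g` is conjugate to `g'` by an element of `H`. -/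
theorem hnn_conjugacy_in_base {H : Type*} [Group H] (A B : Subgroup H) (φ : A ≃* B)
    (g g' : H)
    (hconj : ∃ u : HNNExtension H A B φ,
      u * HNNExtension.of g * u⁻¹ = HNNExtension.of g')
    (hg : ∀ h : H, h * g * h⁻¹ ∉ A ∧ h * g * h⁻¹ ∉ B) :
    (∀ h : H, h * g' * h⁻¹ ∉ A ∧ h * g' * h⁻¹ ∉ B) ∧ ∃ h : H, h * g * h⁻¹ = g' := by
  have key : ∃ h : H, h * g * h⁻¹ = g' := by
    obtain ⟨u, hu⟩ := hconj
    obtain ⟨d⟩ := HNNExtension.NormalWord.TransversalPair.nonempty H A B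
    obtain ⟨⟨⟨x, l, hl⟩, _⟩, hw⟩ := (HNNExtension.NormalWord.equiv φ d).symm.surjective u⁻¹
    change HNNExtension.NormalWord.ReducedWord.prod φ ⟨x, l, hl⟩ = u⁻¹ at hw
    have hu' : HNNExtension.of g * u⁻¹ = u⁻¹ * HNNExtension.of g' := by
      rw [← hu]; group
    rw [← hw] at hu'
    rcases List.eq_nil_or_concat l with rfl | ⟨l₀, ⟨e, y⟩, rfl⟩
    · refine ⟨x⁻¹, ?_⟩
      simp only [HNNExtension.NormalWord.ReducedWord.prod, List.map_nil, List.prod_nil, mul_one,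
        ← map_mul] at hu'
      have := HNNExtension.of_injective φ hu'
      rw [mul_assoc, inv_inv, this]; group
    · exfalso
      have hl2 := hl
      rw [List.concat_eq_append, List.isChain_append] at hl2
      have hl3 : (l₀ ++ [(e, y * g')]).IsChain
          (fun a b => a.2 ∈ HNNExtension.toSubgroup A B a.1 → a.1 = b.1) := by
        rw [List.isChain_append]
        refine ⟨hl2.1, by simp, ?_⟩
        intro a ha b hb
        have := hl2.2.2 a ha (e, y) (by simp)
        simp at hb
        subst hb
        exact this
      have hp := HNNExtension.ReducedWord.map_fst_eq_and_of_prod_eq φ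
        (w₁ := ⟨x, l₀ ++ [(e, y * g')], hl3⟩) (w₂ := ⟨g * x, l₀.concat (e, y), hl⟩) (by
          simp only [HNNExtension.NormalWord.ReducedWord.prod] at hu' ⊢
          simp only [map_mul, mul_assoc] at hu' ⊢
          rw [hu']
          simp [mul_assoc])
      have h2 := hp.2
      dsimp only at h2
      obtain ⟨v, hv⟩ : ∃ v, v ∈ (l₀ ++ [(e, y * g')]).head?.map Prod.fst := by
        cases l₀ <;> simp
      have h3 := h2 v hv
      have h4 := hg x⁻¹
      rw [inv_inv, mul_assoc] at h4
      rcases Int.units_eq_one_or v with rfl | rfl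
      · exact h4.2 h3
      · rw [neg_neg] at h3
        exact h4.1 h3
  refine ⟨?_, key⟩
  obtain ⟨k, rfl⟩ := key
  intro h
  have := hg (h * k)
  simpa [mul_assoc] using this
end
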